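/- For every positive integer n, the symmetric group S_n possesses a 2-basic set B that contains every self-associated irreducible character, i.e., every irreducible complex character χ of S_n satisfying ε⊗χ = χ, where ε denotes the sign character of S_n. -/

import Mathlib

open scoped Classical

/-- `f : G → ℂ` is an irreducible complex character of `G`. -/
def IsIrrChar (G : Type) [Group G] (f : G → ℂ) : Prop :=
  ∃ V : FDRep ℂ G, CategoryTheory.Simple V ∧ FDRep.character V = f

/-- Restriction of a function to 2-regular (odd order) elements, extended by zero. -/
noncomputable def twoReg {G : Type*} [Monoid G] (f : G → ℂ) : G → ℂ :=
  fun g => if Odd (orderOf g) then f g else 0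

/-- `B` is a 2-basic set of `G`: the restrictions to 2-regular elements of the members of `B`
are `ℤ`-linearly independent and span the same `ℤ`-module as the restrictions to 2-regular
elements of all irreducible characters. -/
def IsTwoBasicSet (G : Type) [Group G] (B : Set (G → ℂ)) : Prop :=
  B ⊆ {f | IsIrrChar G f} ∧
  LinearIndependent ℤ (fun f : B => twoReg (f : G → ℂ)) ∧
  Submodule.span ℤ (twoReg '' B) = Submodule.span ℤ (twoReg '' {f | IsIrrChar G f})

section CharacterTheory

variable {G : Type} [Group G] [Fintype G]

/-- The bilinear scalar product `|G|⁻¹ ∑ f(x) g(x⁻¹)` of two functions on a finite group. -/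
noncomputable def charInner (f g : G → ℂ) : ℂ :=
  (Nat.card G : ℂ)⁻¹ * ∑ x : G, f x * g x⁻¹

lemma charInner_add_left (f₁ f₂ g : G → ℂ) :
    charInner (f₁ + f₂) g = charInner f₁ g + charInner f₂ g := by
  simp [charInner, add_mul, Finset.sum_add_distrib, mul_add]

lemma charInner_smul_left (c : ℂ) (f g : G → ℂ) :
    charInner (c • f) g = c * charInner f g := by
  simp only [charInner, Pi.smul_apply, smul_eq_mul, mul_assoc, ← Finset.mul_sum]
  ring

lemma charInner_comm (f g : G → ℂ) : charInner f g = charInner g f := by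
  unfold charInner
  congr 1
  refine Fintype.sum_equiv (Equiv.inv G) _ _ fun x => ?_
  simp [mul_comm]

/-- `charInner` as a linear map in its first argument. -/
noncomputable def charInnerLeft (g : G → ℂ) : (G → ℂ) →ₗ[ℂ] ℂ where
  toFun f := charInner f g
  map_add' f₁ f₂ := charInner_add_left f₁ f₂ g
  map_smul' c f := charInner_smul_left c f g

lemma charInner_sum_left {ι : Type*} (s : Finset ι) (f : ι → G → ℂ) (g : G → ℂ) :
    charInner (∑ i ∈ s, f i) g = ∑ i ∈ s, charInner (f i) g :=
  map_sum (charInnerLeft g) f s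

lemma charInner_sum_right {ι : Type*} (s : Finset ι) (f : G → ℂ) (g : ι → G → ℂ) :
    charInner f (∑ i ∈ s, g i) = ∑ i ∈ s, charInner f (g i) := by
  simp_rw [charInner_comm f, charInner_sum_left]

lemma charInner_smul_right (c : ℂ) (f g : G → ℂ) :
    charInner f (c • g) = c * charInner f g := by
  rw [charInner_comm, charInner_smul_left, charInner_comm]

lemma IsIrrChar.charInner_eq {f g : G → ℂ} (hf : IsIrrChar G f) (hg : IsIrrChar G g) :
    charInner f g = if f = g then 1 else 0 := by
  obtain ⟨V, hV, rfl⟩ := hf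
  obtain ⟨W, hW, rfl⟩ := hg
  have : Invertible (Nat.card G : ℂ) := invertibleOfNonzero (by simp)
  have h := FDRep.char_orthonormal V W
  have hVV := FDRep.char_orthonormal V V
  rw [if_pos ⟨CategoryTheory.Iso.refl V⟩] at hVV
  unfold charInner
  split_ifs with hVW
  · rw [← hVW]; simpa using hVV
  · rw [if_neg] at h
    · simpa using h
    · rintro ⟨i⟩
      exact hVW (FDRep.char_iso i)

lemma isIrrChar_character_of_isIrreducible {V : Type} [AddCommGroup V] [Module ℂ V]
    [FiniteDimensional ℂ V] (ρ : Representation ℂ G V) (h : ρ.IsIrreducible) :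
    IsIrrChar G ρ.character := by
  have : Invertible (Nat.card G : ℂ) := invertibleOfNonzero (by simp)
  refine ⟨FDRep.of ρ, ?_, rfl⟩
  rw [FDRep.simple_iff_char_is_norm_one]
  have := Representation.char_orthonormal ρ ρ
  rw [if_pos ⟨Representation.Equiv.refl ρ⟩] at this
  have h2 : (Nat.card G : ℂ) ≠ 0 := by simp
  field_simp at this
  exact this

omit [Fintype G] in
lemma character_eq_add_of_isCompl {V : Type} [AddCommGroup V] [Module ℂ V]
    [FiniteDimensional ℂ V] (ρ : Representation ℂ G V) (S T : Subrepresentation ρ)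
    (h : IsCompl S T) :
    ρ.character = S.toRepresentation.character + T.toRepresentation.character := by
  have hc : IsCompl S.toSubmodule T.toSubmodule := by
    constructor
    · rw [disjoint_iff]
      have := h.1.eq_bot
      exact congrArg Subrepresentation.toSubmodule this
    · rw [codisjoint_iff]
      have := h.2.eq_top
      exact congrArg Subrepresentation.toSubmodule this
  ext g
  have hint := (DirectSum.isInternal_submodule_iff_isCompl
    (fun b : Bool => bif b then S.toSubmodule else T.toSubmodule) (i := true) (j := false)
    (by simp) (by ext x; cases x <;> simp)).2 hc
  have := LinearMap.trace_eq_sum_trace_restrict hint (f := ρ g) (by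
    intro b; cases b
    · exact T.apply_mem_toSubmodule g
    · exact S.apply_mem_toSubmodule g)
  rw [Fintype.sum_bool] at this
  exact this

lemma character_mem_closure {V : Type} [AddCommGroup V] [Module ℂ V]
    [FiniteDimensional ℂ V] (ρ : Representation ℂ G V) :
    ρ.character ∈ Submodule.span ℤ {f | IsIrrChar G f} := by
  induction hd : Module.finrank ℂ V using Nat.strong_induction_on generalizing V with
  | _ d ih =>
  by_cases hirr : ρ.IsIrreducible
  · exact Submodule.subset_span (isIrrChar_character_of_isIrreducible ρ hirr)
  by_cases hnt : Subsingleton V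
  · have : ρ.character = 0 := by
      ext g
      have : ρ g = 0 := Subsingleton.elim _ _
      simp [Representation.character, this]
    rw [this]; exact zero_mem _
  have : ∃ S : Subrepresentation ρ, S ≠ ⊥ ∧ S ≠ ⊤ := by
    by_contra! hS
    apply hirr
    have : Nontrivial (Subrepresentation ρ) := by
      refine ⟨⊥, ⊤, fun hbt => hnt ?_⟩
      have := congrArg Subrepresentation.toSubmodule hbt
      exact (Submodule.subsingleton_iff ℂ).1 (subsingleton_of_bot_eq_top this)
    exact ⟨fun S => or_iff_not_imp_left.2 (hS S)⟩
  obtain ⟨S, hb, ht⟩ := this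
  have : NeZero (Nat.card G : ℂ) := ⟨by simp⟩
  have hss : ρ.IsSemisimpleRepresentation := inferInstance
  obtain ⟨T, hST⟩ := hss.exists_isCompl S
  rw [character_eq_add_of_isCompl ρ S T hST]
  have key : ∀ S : Subrepresentation ρ, S ≠ ⊤ → Module.finrank ℂ S.toSubmodule < d := by
    intro S hS
    rw [← hd]
    apply Submodule.finrank_lt
    rw [ne_eq] at hS ⊢
    intro h; apply hS
    exact Subrepresentation.toSubmodule_injective h
  refine add_mem (ih _ (key S ht) _ rfl) (ih _ (key T ?_) _ rfl)
  rintro rfl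
  exact hb (by simpa using hST.1.eq_bot)

/-- The permutation representation on functions attached to an action by permutations. -/
noncomputable def permRepresentation {X : Type} (φ : G →* Equiv.Perm X) :
    Representation ℂ G (X → ℂ) where
  toFun g := LinearMap.funLeft ℂ ℂ (φ g⁻¹)
  map_one' := by ext; simp
  map_mul' a b := by
    refine LinearMap.ext fun f => funext fun x => ?_
    simp [LinearMap.funLeft_apply]

/-- A permutation character is a virtual character. -/
lemma card_fixed_mem_span {X : Type} [Fintype X] (φ : G →* Equiv.Perm X) :
    (fun g : G => (Nat.card {x // φ g x = x} : ℂ)) ∈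
      Submodule.span ℤ {f | IsIrrChar G f} := by
  have h := character_mem_closure (permRepresentation φ)
  convert h using 1
  ext g
  rw [Representation.character, LinearMap.trace_eq_matrix_trace ℂ (Pi.basisFun ℂ X)]
  simp only [Matrix.trace, Matrix.diag, LinearMap.toMatrix_apply]
  simp only [permRepresentation, map_inv, MonoidHom.coe_mk, OneHom.coe_mk, Pi.basisFun_apply,
    Pi.basisFun_repr, LinearMap.funLeft_apply, Pi.single_apply, Finset.sum_boole,
    Nat.card_eq_fintype_card, Fintype.card_subtype]
  congr 2
  ext x
  have := (Equiv.symm_apply_eq (φ g) (x := x) (y := x))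
  simp only [Finset.mem_filter, Finset.mem_univ, true_and]
  exact ⟨fun h => this.2 h.symm, fun h => (this.1 h).symm⟩

/-- A virtual character of norm one is an irreducible character up to sign. -/
lemma exists_isIrrChar_of_charInner_self {χ : G → ℂ}
    (hχ : χ ∈ Submodule.span ℤ {f | IsIrrChar G f}) (h1 : charInner χ χ = 1) :
    ∃ s : ℤ, (s = 1 ∨ s = -1) ∧ IsIrrChar G (s • χ) := by
  rw [← Subtype.range_coe_subtype (p := fun f => IsIrrChar G f),
    Finsupp.mem_span_range_iff_exists_finsupp] at hχ
  obtain ⟨c, rfl⟩ := hχ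
  have hexp : charInner (c.sum fun i a => a • (i : G → ℂ)) (c.sum fun i a => a • (i : G → ℂ)) =
      ((∑ i ∈ c.support, c i ^ 2 : ℤ) : ℂ) := by
    simp only [Finsupp.sum, charInner_sum_left, charInner_sum_right]
    push_cast
    refine Finset.sum_congr rfl fun i hi => ?_
    rw [Finset.sum_eq_single i]
    · rw [← Int.cast_smul_eq_zsmul ℂ, charInner_smul_left, charInner_smul_right,
        IsIrrChar.charInner_eq i.2 i.2, if_pos rfl]
      ring
    · intro j _ hj
      rw [← Int.cast_smul_eq_zsmul ℂ, ← Int.cast_smul_eq_zsmul ℂ, charInner_smul_left,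
        charInner_smul_right, IsIrrChar.charInner_eq j.2 i.2, if_neg]
      · ring
      · exact fun h => hj (Subtype.ext h)
    · intro h; exact absurd hi h
  rw [hexp] at h1
  have h1' : ∑ i ∈ c.support, c i ^ 2 = 1 := by exact_mod_cast h1
  have hpos : ∀ i ∈ c.support, 1 ≤ c i ^ 2 := fun i hi => by
    have : c i ≠ 0 := by simpa using hi
    have := sq_pos_of_ne_zero this
    omega
  have hcard : c.support.card = 1 := by
    have hle : (c.support.card : ℤ) ≤ 1 := by
      rw [← h1']
      simpa using Finset.card_nsmul_le_sum c.support (fun i => c i ^ 2) 1 hpos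
    have : c.support.card ≠ 0 := by
      intro h0
      rw [Finset.card_eq_zero] at h0
      simp [h0] at h1'
    omega
  obtain ⟨i, hi⟩ := Finset.card_eq_one.1 hcard
  rw [hi, Finset.sum_singleton] at h1'
  refine ⟨c i, by
    have h0 : (c i - 1) * (c i + 1) = 0 := by linarith [h1', pow_two (c i)]
    rcases mul_eq_zero.1 h0 with h | h <;> omega, ?_⟩
  have : c i • (c.sum fun i a => a • (i : G → ℂ)) = i := by
    rw [Finsupp.sum, hi, Finset.sum_singleton, smul_smul, ← pow_two, h1', one_smul]
  rw [this]
  exact i.2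

end CharacterTheory

section Orbits

variable {α : Type} [Fintype α] [DecidableEq α] (π : Equiv.Perm α)

/-- The cycles of a permutation, fixed points included. -/
abbrev PermOrbit : Type := Quotient (Equiv.Perm.SameCycle.setoid π)

noncomputable instance : Fintype (PermOrbit π) := Fintype.ofFinite _

/-- The number of elements of a cycle. -/
noncomputable def permOrbitCard (q : PermOrbit π) : ℕ :=
  (Finset.univ.filter fun a : α => (Quotient.mk (Equiv.Perm.SameCycle.setoid π) a) = q).card

lemma permOrbitCard_mk (a : α) :
    permOrbitCard π (Quotient.mk _ a) = (Finset.univ.filter fun b => π.SameCycle a b).card := by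
  unfold permOrbitCard
  congr 1
  ext b
  simp only [Finset.mem_filter, Finset.mem_univ, true_and, Quotient.eq]
  exact ⟨fun h => h.symm, fun h => h.symm⟩

/-- The map from nontrivial cycles and fixed points to orbits. -/
noncomputable def toPermOrbit :
    π.cycleFactorsFinset ⊕ {x // π x = x} → PermOrbit π
  | Sum.inl c => Quotient.mk _
      ((Equiv.Perm.mem_cycleFactorsFinset_iff.1 c.2).1.nonempty_support.choose)
  | Sum.inr x => Quotient.mk _ x.1

lemma permOrbitCard_toPermOrbit_inl (c : π.cycleFactorsFinset) :
    permOrbitCard π (toPermOrbit π (Sum.inl c)) = c.1.support.card := by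
  have h := (Equiv.Perm.mem_cycleFactorsFinset_iff.1 c.2).1.nonempty_support.choose_spec
  set a := (Equiv.Perm.mem_cycleFactorsFinset_iff.1 c.2).1.nonempty_support.choose with ha
  have hc : c.1 = π.cycleOf a := Equiv.Perm.cycle_is_cycleOf h c.2
  rw [toPermOrbit, permOrbitCard_mk, ← ha]
  congr 1
  ext b
  rw [hc, Equiv.Perm.mem_support_cycleOf_iff]
  have : a ∈ π.support := Equiv.Perm.mem_cycleFactorsFinset_support_le c.2 h
  simp [this]

lemma permOrbitCard_toPermOrbit_inr (x : {x // π x = x}) :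
    permOrbitCard π (toPermOrbit π (Sum.inr x)) = 1 := by
  rw [toPermOrbit, permOrbitCard_mk, Finset.card_eq_one]
  refine ⟨x.1, ?_⟩
  ext b
  simp only [Finset.mem_filter, Finset.mem_univ, true_and, Finset.mem_singleton]
  exact ⟨fun h => (h.eq_of_left x.2).symm, fun h => h ▸ Equiv.Perm.SameCycle.refl _ _⟩

lemma toPermOrbit_bijective : Function.Bijective (toPermOrbit π) := by
  constructor
  · rintro (c | x) (d | y) h
    · have hc := (Equiv.Perm.mem_cycleFactorsFinset_iff.1 c.2).1.nonempty_support.choose_spec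
      have hd := (Equiv.Perm.mem_cycleFactorsFinset_iff.1 d.2).1.nonempty_support.choose_spec
      have h' := Quotient.exact h
      congr 1
      ext1
      rw [Equiv.Perm.cycle_is_cycleOf hc c.2, Equiv.Perm.cycle_is_cycleOf hd d.2]
      exact Equiv.Perm.SameCycle.cycleOf_eq h'
    · exfalso
      have hc := (Equiv.Perm.mem_cycleFactorsFinset_iff.1 c.2).1.nonempty_support.choose_spec
      have h1 := permOrbitCard_toPermOrbit_inl π c
      rw [h, permOrbitCard_toPermOrbit_inr] at h1
      have := (Equiv.Perm.mem_cycleFactorsFinset_iff.1 c.2).1.two_le_card_support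
      omega
    · exfalso
      have h1 := permOrbitCard_toPermOrbit_inl π d
      rw [← h, permOrbitCard_toPermOrbit_inr] at h1
      have := (Equiv.Perm.mem_cycleFactorsFinset_iff.1 d.2).1.two_le_card_support
      omega
    · have h' : π.SameCycle x.1 y.1 := Quotient.exact h
      congr 1
      ext1
      exact h'.eq_of_left x.2
  · intro q
    induction q using Quotient.inductionOn with
    | _ a =>
    by_cases ha : π a = a
    · exact ⟨Sum.inr ⟨a, ha⟩, rfl⟩
    · have ha' : π.cycleOf a ∈ π.cycleFactorsFinset :=
        Equiv.Perm.cycleOf_mem_cycleFactorsFinset_iff.2 (Equiv.Perm.mem_support.2 ha)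
      refine ⟨Sum.inl ⟨_, ha'⟩, Quotient.sound ?_⟩
      have h := (Equiv.Perm.mem_cycleFactorsFinset_iff.1 ha').1.nonempty_support.choose_spec
      exact ((Equiv.Perm.mem_support_cycleOf_iff.1 h).1).symm

lemma prod_permOrbitCard {M : Type*} [CommMonoid M] (F : ℕ → M) :
    ∏ q : PermOrbit π, F (permOrbitCard π q) = (π.partition.parts.map F).prod := by
  rw [← Function.Bijective.prod_comp (toPermOrbit_bijective π), Fintype.prod_sum_type]
  simp only [permOrbitCard_toPermOrbit_inl, permOrbitCard_toPermOrbit_inr]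
  rw [Equiv.Perm.parts_partition, Multiset.map_add, Multiset.prod_add, Multiset.map_replicate,
    Multiset.prod_replicate, Equiv.Perm.cycleType_def, Multiset.map_map]
  congr 1
  · rw [Finset.prod_coe_sort π.cycleFactorsFinset (fun c => F c.support.card)]
    rfl
  · rw [Finset.prod_const, Finset.card_univ, Fintype.card_subtype]
    congr 1
    have := Finset.card_compl π.support
    rw [← this]
    congr 1
    ext x
    simp

end Orbits

section PowerSums

variable {N : ℕ}

/-- Laurent polynomials in `N` variables with integer coefficients. -/
abbrev LaurentAlg (N : ℕ) : Type := AddMonoidAlgebra ℤ (Fin N → ℤ)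

/-- The power sum `∑ xᵢᵏ`. -/
noncomputable def powerSum (N k : ℕ) : LaurentAlg N :=
  ∑ i : Fin N, AddMonoidAlgebra.single (Pi.single i (k : ℤ)) 1

lemma coeff_powerSum_mul (k : ℕ) (f : LaurentAlg N) (c : Fin N → ℤ) :
    (powerSum N k * f).coeff c = ∑ i : Fin N, f.coeff (c - Pi.single i (k : ℤ)) := by
  rw [powerSum, Finset.sum_mul, AddMonoidAlgebra.coeff_sum, Finset.sum_apply']
  refine Finset.sum_congr rfl fun i _ => ?_
  rw [AddMonoidAlgebra.coeff_single_mul_apply, one_mul, neg_add_eq_sub]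

/-- The content of a word `f`: the number of occurrences of each letter. -/
noncomputable def content {α ι : Type} [Fintype α] [DecidableEq ι] (f : α → ι) : ι → ℤ :=
  fun i => (Finset.univ.filter fun a => f a = i).card

/-- The generating function of the contents of the words fixed by a permutation. -/
noncomputable def fixedWords {α : Type} [Fintype α] [DecidableEq α] (N : ℕ) (π : Equiv.Perm α) : LaurentAlg N :=
  ∑ f ∈ Finset.univ.filter (fun f : α → Fin N => f ∘ π = f), AddMonoidAlgebra.single (content f) 1

lemma content_comp_mk {α : Type} [Fintype α] [DecidableEq α] (π : Equiv.Perm α) (g : PermOrbit π → Fin N) :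
    content (fun a => g (Quotient.mk _ a)) =
      ∑ q, Pi.single (g q) (permOrbitCard π q : ℤ) := by
  ext i
  rw [Finset.sum_apply, content]
  simp only [Pi.single_apply, permOrbitCard]
  rw [Finset.card_eq_sum_card_fiberwise
    (f := fun a => (Quotient.mk (Equiv.Perm.SameCycle.setoid π) a)) (t := Finset.univ)
    (by simp)]
  push_cast
  refine Finset.sum_congr rfl fun q _ => ?_
  rw [Finset.filter_filter]
  split_ifs with h
  · congr 2
    ext a
    simp only [Finset.mem_filter, Finset.mem_univ, true_and]
    exact ⟨fun h => h.2, fun h' => ⟨by rw [h', h], h'⟩⟩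
  · rw [Nat.cast_eq_zero, Finset.card_eq_zero]
    ext a
    simp only [Finset.mem_filter, Finset.mem_univ, true_and, Finset.notMem_empty, iff_false]
    rintro ⟨h1, rfl⟩
    exact h h1.symm

lemma fixedWords_eq {α : Type} [Fintype α] [DecidableEq α] (π : Equiv.Perm α) :
    fixedWords N π = (π.partition.parts.map (powerSum N)).prod := by
  rw [← prod_permOrbitCard]
  simp only [powerSum]
  rw [Finset.prod_univ_sum, Fintype.piFinset_univ, fixedWords]
  symm
  refine Finset.sum_bij (fun g _ a => g (Quotient.mk _ a)) ?_ ?_ ?_ ?_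
  · intro g _
    simp only [Finset.mem_filter, Finset.mem_univ, true_and]
    ext a
    have : (Quotient.mk (Equiv.Perm.SameCycle.setoid π) (π a)) = Quotient.mk _ a :=
      Quotient.sound (Equiv.Perm.sameCycle_apply_left.2 (Equiv.Perm.SameCycle.refl _ _))
    simp [this]
  · intro g _ g' _ h
    ext q
    induction q using Quotient.inductionOn with
    | _ a => rw [congrFun h a]
  · intro f hf
    simp only [Finset.mem_filter, Finset.mem_univ, true_and] at hf
    have hz : ∀ (m : ℕ) a, f ((π ^ m) a) = f a := by
      intro m
      induction m with
      | zero => simp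
      | succ m ih =>
        intro a
        rw [pow_succ, Equiv.Perm.mul_apply, ih, ← congrFun hf a, Function.comp]
    refine ⟨Quotient.lift f ?_, Finset.mem_univ _, rfl⟩
    rintro a b hab
    obtain ⟨m, -, hm⟩ := Equiv.Perm.SameCycle.exists_pow_eq' hab
    rw [← hm, hz]
  · intro g _
    rw [content_comp_mk]
    clear * -
    induction (Finset.univ : Finset (PermOrbit π)) using Finset.induction_on with
    | empty => simp [AddMonoidAlgebra.one_def]
    | insert q s hq ih =>
      rw [Finset.prod_insert hq, Finset.sum_insert hq, ih, AddMonoidAlgebra.single_mul_single,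
        one_mul]

end PowerSums

section Alternants

variable {N : ℕ}

/-- The Vandermonde alternant. -/
noncomputable def alternant (N : ℕ) : LaurentAlg N :=
  ∑ σ : Equiv.Perm (Fin N),
    AddMonoidAlgebra.single (fun i => ((σ i : ℕ) : ℤ)) ((Equiv.Perm.sign σ : ℤˣ) : ℤ)

/-- Antisymmetric functions of `N` integers. -/
def IsAlternating (g : (Fin N → ℤ) → ℤ) : Prop :=
  ∀ (σ : Equiv.Perm (Fin N)) c, g (c ∘ σ) = ((Equiv.Perm.sign σ : ℤˣ) : ℤ) * g c

/-- `g` is supported on nonnegative tuples with sum `s`. -/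
def IsSupportedOn (s : ℤ) (g : (Fin N → ℤ) → ℤ) : Prop :=
  ∀ c, g c ≠ 0 → (∀ i, 0 ≤ c i) ∧ ∑ i, c i = s

/-- The sum `0 + 1 + ⋯ + (N - 1)`. -/
def staircaseSum (N : ℕ) : ℤ := ∑ i : Fin N, ((i : ℕ) : ℤ)

lemma coeff_alternant (c : Fin N → ℤ) :
    (alternant N).coeff c = ∑ σ : Equiv.Perm (Fin N),
      if (fun i => ((σ i : ℕ) : ℤ)) = c then ((Equiv.Perm.sign σ : ℤˣ) : ℤ) else 0 := by
  rw [alternant, AddMonoidAlgebra.coeff_sum, Finset.sum_apply']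
  refine Finset.sum_congr rfl fun σ _ => ?_
  rw [AddMonoidAlgebra.coeff_single, Finsupp.single_apply]

lemma coeff_alternant_mul (f : LaurentAlg N) (c : Fin N → ℤ) :
    (alternant N * f).coeff c = ∑ σ : Equiv.Perm (Fin N),
      ((Equiv.Perm.sign σ : ℤˣ) : ℤ) * f.coeff (c - fun i => ((σ i : ℕ) : ℤ)) := by
  rw [alternant, Finset.sum_mul, AddMonoidAlgebra.coeff_sum, Finset.sum_apply']
  refine Finset.sum_congr rfl fun σ _ => ?_
  rw [AddMonoidAlgebra.coeff_single_mul_apply, neg_add_eq_sub]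

lemma isAlternating_alternant : IsAlternating (alternant N).coeff := by
  intro τ c
  rw [coeff_alternant, coeff_alternant, Finset.mul_sum]
  rw [← Equiv.sum_comp (Equiv.mulRight τ)]
  refine Finset.sum_congr rfl fun σ _ => ?_
  have : ((fun i => (((Equiv.mulRight τ σ) i : ℕ) : ℤ)) = c ∘ τ) ↔
      ((fun i => ((σ i : ℕ) : ℤ)) = c) := by
    constructor
    · intro h
      ext i
      have := congrFun h (τ⁻¹ i)
      simpa using this
    · rintro rfl
      ext i
      simp
  simp only [this]
  split_ifs
  · simp [mul_comm]
  · simp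

lemma isSupportedOn_alternant : IsSupportedOn (staircaseSum N) (alternant N).coeff := by
  intro c hc
  rw [coeff_alternant] at hc
  obtain ⟨σ, -, hσ⟩ := Finset.exists_ne_zero_of_sum_ne_zero hc
  have h : (fun i => ((σ i : ℕ) : ℤ)) = c := by
    by_contra h
    exact hσ (if_neg h)
  subst h
  exact ⟨fun i => by positivity, Equiv.sum_comp σ (fun i : Fin N => ((i : ℕ) : ℤ))⟩

lemma IsAlternating.powerSum_mul {f : LaurentAlg N} (hf : IsAlternating f.coeff) (k : ℕ) :
    IsAlternating (powerSum N k * f).coeff := by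
  intro τ c
  rw [coeff_powerSum_mul, coeff_powerSum_mul, Finset.mul_sum]
  symm
  rw [← Equiv.sum_comp τ]
  refine Finset.sum_congr rfl fun i _ => ?_
  rw [← hf τ]
  congr 1
  ext j
  simp [Pi.single_apply]

lemma IsSupportedOn.powerSum_mul {f : LaurentAlg N} {s : ℤ} (hf : IsSupportedOn s f.coeff)
    (k : ℕ) : IsSupportedOn (s + k) (powerSum N k * f).coeff := by
  intro c hc
  rw [coeff_powerSum_mul] at hc
  obtain ⟨i, -, hi⟩ := Finset.exists_ne_zero_of_sum_ne_zero hc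
  obtain ⟨h1, h2⟩ := hf _ hi
  constructor
  · intro j
    have := h1 j
    simp only [Pi.sub_apply] at this
    have h3 : (0 : ℤ) ≤ (Pi.single i (k : ℤ) : Fin N → ℤ) j := by
      rw [Pi.single_apply]; split_ifs <;> positivity
    linarith
  · simp only [Pi.sub_apply, Finset.sum_sub_distrib, Finset.sum_pi_single', Finset.mem_univ,
      if_true] at h2
    have h3 : ∑ j, (Pi.single i (k : ℤ) : Fin N → ℤ) j = k := by
      simp [Pi.single_apply]
    linarith

/-- The alternant times a product of power sums. -/
noncomputable def powerAlternant (N : ℕ) (m : Multiset ℕ) : LaurentAlg N :=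
  (m.map (powerSum N)).prod * alternant N

lemma powerAlternant_cons (k : ℕ) (m : Multiset ℕ) :
    powerAlternant N (k ::ₘ m) = powerSum N k * powerAlternant N m := by
  simp [powerAlternant, mul_assoc]

lemma powerAlternant_zero : powerAlternant N 0 = alternant N := by
  simp [powerAlternant]

lemma isAlternating_powerAlternant (m : Multiset ℕ) :
    IsAlternating (powerAlternant N m).coeff := by
  induction m using Multiset.induction_on with
  | empty => rw [powerAlternant_zero]; exact isAlternating_alternant
  | cons k m ih => rw [powerAlternant_cons]; exact ih.powerSum_mul k

lemma isSupportedOn_powerAlternant (m : Multiset ℕ) :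
    IsSupportedOn (staircaseSum N + m.sum) (powerAlternant N m).coeff := by
  induction m using Multiset.induction_on with
  | empty => simpa [powerAlternant_zero] using isSupportedOn_alternant
  | cons k m ih =>
    rw [powerAlternant_cons, Multiset.sum_cons]
    convert ih.powerSum_mul k using 1
    push_cast
    ring

lemma IsAlternating.eq_zero_of_eq {g : (Fin N → ℤ) → ℤ} (hg : IsAlternating g) {c : Fin N → ℤ}
    {i j : Fin N} (hij : i ≠ j) (h : c i = c j) : g c = 0 := by
  have h1 := hg (Equiv.swap i j) c
  have h2 : c ∘ Equiv.swap i j = c := by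
    ext k
    simp only [Function.comp]
    rcases eq_or_ne k i with rfl | hki
    · simp [h]
    rcases eq_or_ne k j with rfl | hkj
    · simp [h]
    rw [Equiv.swap_apply_of_ne_of_ne hki hkj]
  rw [h2, Equiv.Perm.sign_swap hij] at h1
  push_cast at h1
  linarith

lemma IsAlternating.injective_of_ne_zero {g : (Fin N → ℤ) → ℤ} (hg : IsAlternating g)
    {c : Fin N → ℤ} (h : g c ≠ 0) : Function.Injective c := by
  intro i j hij
  by_contra hne
  exact h (hg.eq_zero_of_eq hne hij)

end Alternants

section VirtualCharacters

variable {N n : ℕ}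

/-- The virtual character of `Sₙ` attached to the exponent vector `c`, i.e. the coefficient of
`x^c` in the alternant times the power sum product of the cycle type. -/
noncomputable def vchar (N n : ℕ) (c : Fin N → ℤ) (π : Equiv.Perm (Fin n)) : ℂ :=
  ((powerAlternant N π.partition.parts).coeff c : ℤ)

lemma powerAlternant_parts (π : Equiv.Perm (Fin n)) :
    powerAlternant N π.partition.parts = alternant N * fixedWords N π := by
  rw [powerAlternant, fixedWords_eq, mul_comm]

lemma parts_sum (π : Equiv.Perm (Fin n)) : π.partition.parts.sum = n := by
  rw [π.partition.parts_sum, Fintype.card_fin]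

lemma vchar_inv (c : Fin N → ℤ) (π : Equiv.Perm (Fin n)) : vchar N n c π⁻¹ = vchar N n c π := by
  have : fixedWords N π⁻¹ = fixedWords N π := by
    unfold fixedWords
    congr 1
    ext f
    simp only [Finset.mem_filter, Finset.mem_univ, true_and]
    constructor
    · intro h
      nth_rewrite 1 [← h]
      ext; simp
    · intro h
      nth_rewrite 1 [← h]
      ext; simp
  simp only [vchar, powerAlternant_parts, this]

lemma coeff_fixedWords (π : Equiv.Perm (Fin n)) (c : Fin N → ℤ) :
    (fixedWords N π).coeff c =
      (Finset.univ.filter fun f : Fin n → Fin N => f ∘ π = f ∧ content f = c).card := by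
  rw [fixedWords, AddMonoidAlgebra.coeff_sum, Finset.sum_apply', ← Finset.filter_filter]
  simp only [AddMonoidAlgebra.coeff_single, Finsupp.single_apply, Finset.sum_boole]

lemma content_comp {ι : Type} [DecidableEq ι] (f : Fin n → ι) (π : Equiv.Perm (Fin n)) : content (f ∘ π) = content f := by
  ext i
  unfold content
  congr 1
  refine Finset.card_bij (fun a _ => π a) (by simp) (by simp) ?_
  intro b hb
  exact ⟨π⁻¹ b, by simpa using hb, by simp⟩

/-- The permutation action on words with content `c`. -/
def wordPerm {ι : Type} [DecidableEq ι] (c : ι → ℤ) :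
    Equiv.Perm (Fin n) →* Equiv.Perm {f : Fin n → ι // content f = c} where
  toFun π :=
    { toFun := fun f => ⟨f.1 ∘ (π⁻¹ : Equiv.Perm (Fin n)), by rw [content_comp, f.2]⟩
      invFun := fun f => ⟨f.1 ∘ π, by rw [content_comp, f.2]⟩
      left_inv := fun f => by ext; simp
      right_inv := fun f => by ext; simp }
  map_one' := by ext; simp
  map_mul' a b := by ext; simp

lemma card_fixed_words_eq {ι : Type} [Fintype ι] [DecidableEq ι] (π : Equiv.Perm (Fin n))
    (c : ι → ℤ) :
    (Finset.univ.filter fun f : Fin n → ι => f ∘ π = f ∧ content f = c).card =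
      Nat.card {x : {f : Fin n → ι // content f = c} // wordPerm c π x = x} := by
  rw [Nat.card_eq_fintype_card, Fintype.card_subtype]
  symm
  refine Finset.card_bij (fun f _ => f.1) ?_ (fun _ _ _ _ h => Subtype.ext h) ?_
  · rintro f hf
    simp only [Finset.mem_filter, Finset.mem_univ, true_and] at hf ⊢
    refine ⟨?_, f.2⟩
    have := congrArg Subtype.val hf
    nth_rewrite 1 [← this]
    ext; simp [wordPerm]
  · intro f hf
    simp only [Finset.mem_filter, Finset.mem_univ, true_and] at hf
    refine ⟨⟨f, hf.2⟩, ?_, rfl⟩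
    simp only [Finset.mem_filter, Finset.mem_univ, true_and]
    ext1
    change f ∘ (π⁻¹ : Equiv.Perm (Fin n)) = f
    nth_rewrite 1 [← hf.1]
    ext; simp

lemma coeff_fixedWords_eq_card (π : Equiv.Perm (Fin n)) (c : Fin N → ℤ) :
    (fixedWords N π).coeff c =
      Nat.card {x : {f : Fin n → Fin N // content f = c} // wordPerm c π x = x} := by
  rw [coeff_fixedWords, card_fixed_words_eq]

lemma vchar_mem_span (c : Fin N → ℤ) :
    vchar N n c ∈ Submodule.span ℤ {f | IsIrrChar (Equiv.Perm (Fin n)) f} := by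
  have : vchar N n c = ∑ σ : Equiv.Perm (Fin N), ((Equiv.Perm.sign σ : ℤˣ) : ℤ) •
      (fun π : Equiv.Perm (Fin n) => (Nat.card {x : {f : Fin n → Fin N //
        content f = c - fun i => ((σ i : ℕ) : ℤ)} // wordPerm _ π x = x} : ℂ)) := by
    ext π
    rw [vchar, powerAlternant_parts, coeff_alternant_mul, Finset.sum_apply, Int.cast_sum]
    refine Finset.sum_congr rfl fun σ _ => ?_
    rw [coeff_fixedWords_eq_card, Pi.smul_apply, Int.cast_mul, Int.cast_natCast, zsmul_eq_mul]
  rw [this]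
  exact sum_mem fun σ _ => Submodule.smul_mem _ _ (card_fixed_mem_span _)

end VirtualCharacters

section Burnside

lemma sum_card_fixed_of_transitive {G X : Type} [Group G] [Fintype G] [Fintype X] [Nonempty X]
    (φ : G →* Equiv.Perm X) (h : ∀ x y, ∃ g, φ g x = y) :
    ∑ g : G, Nat.card {x // φ g x = x} = Fintype.card G := by
  let _ : MulAction G X := MulAction.compHom X φ
  have ht : MulAction.IsPretransitive G X := ⟨h⟩
  have h1 := MulAction.sum_card_fixedBy_eq_card_orbits_mul_card_group G X
  have h2 : Fintype.card (Quotient (MulAction.orbitRel G X)) = 1 := by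
    rw [Fintype.card_eq_one_iff_nonempty_unique]
    have := (MulAction.pretransitive_iff_subsingleton_quotient G X).1 ht
    have hn : Nonempty (Quotient (MulAction.orbitRel G X)) := ⟨Quotient.mk _ (Classical.arbitrary X)⟩
    exact ⟨⟨⟨hn.some⟩, fun a => this.elim _ _⟩⟩
  rw [h2, one_mul] at h1
  rw [← h1]
  refine Finset.sum_congr rfl fun g _ => ?_
  rw [Nat.card_eq_fintype_card]
  rfl

variable {n : ℕ} {ι : Type} [Fintype ι] [DecidableEq ι]

omit [Fintype ι] in
lemma exists_perm_of_content_eq (f g : Fin n → ι) (h : content f = content g) :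
    ∃ π : Equiv.Perm (Fin n), f ∘ (π⁻¹ : Equiv.Perm (Fin n)) = g := by
  have e : ∀ t : ι, Nonempty ({a // f a = t} ≃ {a // g a = t}) := fun t => by
    rw [← Fintype.card_eq, Fintype.card_subtype, Fintype.card_subtype]
    have := congrFun h t
    simp only [content] at this
    exact_mod_cast this
  let E := Equiv.ofFiberEquiv fun t => (e t).some
  refine ⟨E, ?_⟩
  ext a
  obtain ⟨b, rfl⟩ := E.surjective a
  have : g (E b) = f b := Equiv.ofFiberEquiv_map _ b
  simp [this]

lemma exists_word_content (M : ι → ℕ) (hM : ∑ t, M t = n) :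
    ∃ f : Fin n → ι, content f = fun t => (M t : ℤ) := by
  have e : Nonempty (Fin n ≃ Σ t, Fin (M t)) := by
    rw [← Fintype.card_eq]
    simp [hM]
  refine ⟨fun a => (e.some a).1, ?_⟩
  ext t
  rw [content]
  congr 1
  rw [← Fintype.card_subtype]
  have e2 : {a // (e.some a).1 = t} ≃ Fin (M t) :=
    (Equiv.subtypeEquiv e.some (fun a => Iff.rfl)).trans
      (Equiv.sigmaSubtype t)
  simpa using Fintype.card_congr e2

/-- The number of pairs of a permutation and a word of content `M` fixed by it. -/
lemma sum_card_fixed_words (M : ι → ℕ) (hM : ∑ t, M t = n) :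
    ∑ π : Equiv.Perm (Fin n), (Finset.univ.filter fun f : Fin n → ι =>
      f ∘ π = f ∧ content f = fun t => (M t : ℤ)).card = n.factorial := by
  obtain ⟨f0, hf0⟩ := exists_word_content M hM
  have : Nonempty {f : Fin n → ι // content f = fun t => (M t : ℤ)} := ⟨⟨f0, hf0⟩⟩
  have h := sum_card_fixed_of_transitive (wordPerm (n := n) (fun t => (M t : ℤ)))
    (fun x y => by
      obtain ⟨π, hπ⟩ := exists_perm_of_content_eq x.1 y.1 (x.2.trans y.2.symm)
      exact ⟨π, Subtype.ext hπ⟩)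
  rw [Fintype.card_perm, Fintype.card_fin] at h
  rw [← h]
  refine Finset.sum_congr rfl fun π _ => ?_
  exact card_fixed_words_eq π _

end Burnside

section Tables

variable {N : ℕ}

/-- Nonnegative integer matrices with total sum `n`, row sums `c` and column sums `d`. -/
noncomputable def tables (n : ℕ) (c d : Fin N → ℤ) : Finset (Fin N × Fin N → ℕ) :=
  (Finset.univ.piAntidiag n).filter fun M =>
    (∀ i, ∑ j, (M (i, j) : ℤ) = c i) ∧ (∀ j, ∑ i, (M (i, j) : ℤ) = d j)

lemma mem_tables {n : ℕ} {c d : Fin N → ℤ} {M : Fin N × Fin N → ℕ} :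
    M ∈ tables n c d ↔ ∑ t, M t = n ∧ (∀ i, ∑ j, (M (i, j) : ℤ) = c i) ∧
      (∀ j, ∑ i, (M (i, j) : ℤ) = d j) := by
  simp [tables, Finset.mem_piAntidiag]

/-- The number of elements of `tables n c d`. -/
noncomputable def numTables (n : ℕ) (c d : Fin N → ℤ) : ℤ := (tables n c d).card

lemma content_fst {n : ℕ} (h : Fin n → Fin N × Fin N) (i : Fin N) :
    content (Prod.fst ∘ h) i = ∑ j, content h (i, j) := by
  simp only [content]
  rw [Finset.card_eq_sum_card_fiberwise (f := fun a => (h a).2) (t := Finset.univ) (by simp)]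
  push_cast
  refine Finset.sum_congr rfl fun j _ => ?_
  rw [Finset.filter_filter]
  congr 2
  ext a
  simp [Prod.ext_iff]

lemma content_snd {n : ℕ} (h : Fin n → Fin N × Fin N) (j : Fin N) :
    content (Prod.snd ∘ h) j = ∑ i, content h (i, j) := by
  simp only [content]
  rw [Finset.card_eq_sum_card_fiberwise (f := fun a => (h a).1) (t := Finset.univ) (by simp)]
  push_cast
  refine Finset.sum_congr rfl fun i _ => ?_
  rw [Finset.filter_filter]
  congr 2
  ext a
  simp [Prod.ext_iff, and_comm]

lemma sum_content {n : ℕ} {ι : Type} [Fintype ι] [DecidableEq ι] (h : Fin n → ι) :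
    ∑ t, content h t = n := by
  simp only [content]
  rw [← Nat.cast_sum, ← Finset.card_eq_sum_card_fiberwise (by simp)]
  simp

lemma sum_coeff_fixedWords_mul {n : ℕ} (c d : Fin N → ℤ) :
    ∑ π : Equiv.Perm (Fin n), (fixedWords N π).coeff c * (fixedWords N π).coeff d =
      n.factorial * numTables n c d := by
  have key : ∀ π : Equiv.Perm (Fin n),
      (fixedWords N π).coeff c * (fixedWords N π).coeff d = ∑ M ∈ tables n c d,
        ((Finset.univ.filter fun f : Fin n → Fin N × Fin N =>
          f ∘ π = f ∧ content f = fun t => (M t : ℤ)).card : ℤ) := by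
    intro π
    rw [coeff_fixedWords, coeff_fixedWords, ← Nat.cast_mul, ← Finset.card_product,
      ← Nat.cast_sum]
    congr 1
    have h1 : ((Finset.univ.filter fun f : Fin n → Fin N => f ∘ π = f ∧ content f = c) ×ˢ
        (Finset.univ.filter fun f : Fin n → Fin N => f ∘ π = f ∧ content f = d)).card =
        (Finset.univ.filter fun h : Fin n → Fin N × Fin N => h ∘ π = h ∧
          content (Prod.fst ∘ h) = c ∧ content (Prod.snd ∘ h) = d).card := by
      refine Finset.card_bij (fun p _ a => (p.1 a, p.2 a)) ?_ ?_ ?_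
      · rintro ⟨f, g⟩ hp
        simp only [Finset.mem_product, Finset.mem_filter, Finset.mem_univ, true_and] at hp ⊢
        refine ⟨?_, hp.1.2, hp.2.2⟩
        ext a : 1
        exact Prod.ext (congrFun hp.1.1 a) (congrFun hp.2.1 a)
      · rintro ⟨f, g⟩ _ ⟨f', g'⟩ _ h
        refine Prod.ext ?_ ?_
        · ext a : 1
          exact congrArg Prod.fst (congrFun h a)
        · ext a : 1
          exact congrArg Prod.snd (congrFun h a)
      · intro h hh
        simp only [Finset.mem_filter, Finset.mem_univ, true_and] at hh
        refine ⟨(Prod.fst ∘ h, Prod.snd ∘ h), ?_, rfl⟩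
        simp only [Finset.mem_product, Finset.mem_filter, Finset.mem_univ, true_and]
        refine ⟨⟨?_, hh.2.1⟩, ⟨?_, hh.2.2⟩⟩
        · rw [Function.comp_assoc, hh.1]
        · rw [Function.comp_assoc, hh.1]
    rw [h1, Finset.card_eq_sum_card_fiberwise (t := tables n c d)
      (f := fun h t => (Finset.univ.filter fun a => h a = t).card)]
    · refine Finset.sum_congr rfl fun M hM => ?_
      rw [mem_tables] at hM
      rw [Finset.filter_filter]
      congr 1
      ext h
      simp only [Finset.mem_filter, Finset.mem_univ, true_and]
      have hiff : (fun t => (Finset.univ.filter fun a => h a = t).card) = M ↔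
          content h = fun t => (M t : ℤ) := by
        rw [funext_iff, funext_iff]
        simp [content]
      rw [hiff]
      constructor
      · exact fun hh => ⟨hh.1.1, hh.2⟩
      · rintro ⟨h1, h2⟩
        refine ⟨⟨h1, ?_, ?_⟩, h2⟩
        · ext i; rw [content_fst, h2, hM.2.1]
        · ext j; rw [content_snd, h2, hM.2.2]
    · intro h hh
      simp only [Finset.coe_filter, Finset.mem_univ, true_and, Set.mem_ofPred_eq] at hh
      rw [Finset.mem_coe, mem_tables]
      refine ⟨?_, ?_, ?_⟩
      · have := sum_content h
        simp only [content] at this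
        exact_mod_cast this
      · intro i
        rw [← hh.2.1, content_fst]
        rfl
      · intro i
        rw [← hh.2.2, content_snd]
        rfl
  simp only [key]
  rw [Finset.sum_comm]
  have : ∀ M ∈ tables n c d, ∑ π : Equiv.Perm (Fin n),
      ((Finset.univ.filter fun f : Fin n → Fin N × Fin N =>
          f ∘ π = f ∧ content f = fun t => (M t : ℤ)).card : ℤ) = n.factorial := by
    intro M hM
    rw [← Nat.cast_sum, sum_card_fixed_words M (mem_tables.1 hM).1]
  rw [Finset.sum_congr rfl this, Finset.sum_const, numTables]
  simp [mul_comm]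

lemma mul_numTables (n : ℕ) (c d : Fin N → ℤ) :
    n * numTables n c d = ∑ k ∈ Finset.Icc 1 n, ∑ i, ∑ j,
      numTables (n - k) (c - Pi.single i (k : ℤ)) (d - Pi.single j (k : ℤ)) := by
  have h1 : (n : ℤ) * numTables n c d =
      ∑ M ∈ tables n c d, ∑ t, ∑ k ∈ Finset.Icc 1 n, if k ≤ M t then (1 : ℤ) else 0 := by
    rw [numTables, mul_comm, ← smul_eq_mul, Nat.cast_smul_eq_nsmul, ← Finset.sum_const]
    refine Finset.sum_congr rfl fun M hM => ?_
    have hs := (mem_tables.1 hM).1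
    rw [← hs]
    push_cast
    refine Finset.sum_congr rfl fun t _ => ?_
    have hle : M t ≤ ∑ t, M t := Finset.single_le_sum (fun _ _ => Nat.zero_le _) (Finset.mem_univ t)
    rw [Finset.sum_boole]
    have : (Finset.Icc 1 (∑ t, M t)).filter (fun k => k ≤ M t) = Finset.Icc 1 (M t) := by
      ext k
      simp only [Finset.mem_filter, Finset.mem_Icc]
      omega
    rw [this]
    simp
  rw [h1]
  simp_rw [Finset.sum_comm (s := Finset.univ) (t := Finset.Icc 1 n)]
  rw [Finset.sum_comm]
  refine Finset.sum_congr rfl fun k hk => ?_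
  rw [Finset.sum_comm, Fintype.sum_prod_type]
  refine Finset.sum_congr rfl fun i _ => Finset.sum_congr rfl fun j _ => ?_
  rw [Finset.sum_boole, numTables]
  congr 1
  have hk' := Finset.mem_Icc.1 hk
  have hrow : ∀ (M : Fin N × Fin N → ℤ) i', ∑ j', (M + Pi.single (i, j) (k : ℤ) : Fin N × Fin N → ℤ) (i', j') =
      ∑ j', M (i', j') + (Pi.single i (k : ℤ) : Fin N → ℤ) i' := by
    intro M i'
    simp only [Pi.add_apply, Finset.sum_add_distrib, Pi.single_apply, Prod.mk.injEq]
    congr 1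
    by_cases h : i' = i <;> simp [h]
  have hcol : ∀ (M : Fin N × Fin N → ℤ) j', ∑ i', (M + Pi.single (i, j) (k : ℤ) : Fin N × Fin N → ℤ) (i', j') =
      ∑ i', M (i', j') + (Pi.single j (k : ℤ) : Fin N → ℤ) j' := by
    intro M i'
    simp only [Pi.add_apply, Finset.sum_add_distrib, Pi.single_apply, Prod.mk.injEq]
    congr 1
    by_cases h : i' = j <;> simp [h]
  have hcast : ∀ M : Fin N × Fin N → ℕ, ∀ t,
      ((M + Pi.single (i, j) k : Fin N × Fin N → ℕ) t : ℤ) =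
      ((fun t => (M t : ℤ)) + Pi.single (i, j) (k : ℤ) : Fin N × Fin N → ℤ) t := by
    intro M t
    simp only [Pi.add_apply, Pi.single_apply]
    split_ifs <;> simp
  symm
  refine Finset.card_bij (fun M _ => M + Pi.single (i, j) k) ?_ ?_ ?_
  · intro M hM
    rw [mem_tables] at hM
    rw [Finset.mem_filter, mem_tables]
    refine ⟨⟨?_, ?_, ?_⟩, ?_⟩
    · simp only [Pi.add_apply, Finset.sum_add_distrib, hM.1]
      simp only [Pi.single_apply]
      simp
      omega
    · intro i'
      simp_rw [hcast, hrow, hM.2.1 i']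
      simp
    · intro j'
      simp_rw [hcast, hcol, hM.2.2 j']
      simp
    · simp
  · intro M _ M' _ h
    exact add_right_cancel h
  · intro M hM
    rw [Finset.mem_filter, mem_tables] at hM
    have hsub : (M - Pi.single (i, j) k) + Pi.single (i, j) k = M := by
      ext t
      simp only [Pi.add_apply, Pi.sub_apply, Pi.single_apply]
      split_ifs with h
      · subst h; have := hM.2; omega
      · simp
    refine ⟨M - Pi.single (i, j) k, ?_, hsub⟩
    rw [mem_tables]
    obtain ⟨⟨h1, h2, h3⟩, h4⟩ := hM
    refine ⟨?_, ?_, ?_⟩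
    · rw [← hsub] at h1
      simp only [Pi.add_apply, Finset.sum_add_distrib] at h1
      have : ∑ t, (Pi.single (i, j) k : Fin N × Fin N → ℕ) t = k := by
        simp [Pi.single_apply]
      omega
    · intro i'
      have := h2 i'
      rw [← hsub] at this
      simp_rw [hcast, hrow] at this
      rw [Pi.sub_apply, ← this]; ring
    · intro i'
      have := h3 i'
      rw [← hsub] at this
      simp_rw [hcast, hcol] at this
      rw [Pi.sub_apply, ← this]; ring

end Tables

section Energy

variable {N : ℕ}

lemma sum_range_le_sum_tuple {c : Fin N → ℤ} (hc : Function.Injective c) (h0 : ∀ i, 0 ≤ c i) :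
    staircaseSum N ≤ ∑ i, c i := by
  have h := Finset.sum_range_le_sum (s := Finset.univ.image c) (c := 0)
    (by simpa using h0)
  rw [Finset.card_image_of_injective _ hc, Finset.sum_image (fun _ _ _ _ h => hc h)] at h
  simpa [staircaseSum, Finset.sum_range] using h

lemma staircaseSum_add_le_sum_add {c : Fin N → ℤ} (hc : Function.Injective c)
    (h0 : ∀ i, 0 ≤ c i) {v : ℤ} (hv0 : 0 ≤ v) (hv : ∀ i, c i ≠ v) :
    staircaseSum N + N ≤ ∑ i, c i + v := by
  have h := Finset.sum_range_le_sum (s := insert v (Finset.univ.image c)) (c := 0)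
    (by simpa using ⟨hv0, h0⟩)
  have hn : v ∉ Finset.univ.image c := by simpa using hv
  rw [Finset.card_insert_of_notMem hn, Finset.sum_insert hn,
    Finset.card_image_of_injective _ hc, Finset.sum_image (fun _ _ _ _ h => hc h),
    Finset.sum_range_succ] at h
  simp only [Finset.card_univ, Fintype.card_fin, zero_add] at h
  rw [Finset.sum_range] at h
  rw [staircaseSum]
  linarith

lemma exists_perm_of_sum_eq {c : Fin N → ℤ} (hc : Function.Injective c) (h0 : ∀ i, 0 ≤ c i)
    (hs : ∑ i, c i = staircaseSum N) :
    ∃ ρ : Equiv.Perm (Fin N), c = fun i => ((ρ i : ℕ) : ℤ) := by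
  have hsurj : ∀ v : Fin N, ∃ i, c i = ((v : ℕ) : ℤ) := by
    intro v
    by_contra! h
    have := staircaseSum_add_le_sum_add hc h0 (by positivity) h
    have := v.2
    omega
  choose f hf using hsurj
  have hinj : Function.Injective f := fun a b h => by
    have h1 := hf a
    rw [h, hf b] at h1
    exact Fin.ext (by exact_mod_cast h1.symm)
  let e := Equiv.ofBijective f (Finite.injective_iff_bijective.1 hinj)
  refine ⟨e.symm, ?_⟩
  ext i
  rw [← hf (e.symm i)]
  exact congrArg c (e.apply_symm_apply i).symm

lemma IsAlternating.pair_sum {g : (Fin N → ℤ) → ℤ} (hg : IsAlternating g) {c : Fin N → ℤ}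
    {i l : Fin N} (hil : i ≠ l) (hi : 0 ≤ c i) (hl : 0 ≤ c l) :
    ∑ k ∈ Finset.Icc 1 (c i).toNat, g (c - Pi.single i (k : ℤ) + Pi.single l (k : ℤ)) +
      ∑ k ∈ Finset.Icc 1 (c l).toNat, g (c - Pi.single l (k : ℤ) + Pi.single i (k : ℤ)) =
      - g c := by
  obtain ⟨a, ha⟩ := Int.eq_ofNat_of_zero_le hi
  obtain ⟨b, hb⟩ := Int.eq_ofNat_of_zero_le hl
  let f : ℤ → ℤ := fun x => g (c - Pi.single i ((a : ℤ) - x) + Pi.single l ((a : ℤ) - x))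
  have hf : ∀ x, f ((a + b : ℕ) - x) = - f x := by
    intro x
    simp only [f]
    have := hg (Equiv.swap i l) (c - Pi.single i ((a : ℤ) - x) + Pi.single l ((a : ℤ) - x))
    rw [Equiv.Perm.sign_swap hil] at this
    push_cast at this ⊢
    rw [neg_one_mul] at this
    rw [← this]
    congr 1
    ext m
    simp only [Pi.add_apply, Pi.sub_apply, Function.comp]
    rcases eq_or_ne m i with rfl | hmi
    · simp [hil, hil.symm, ha, hb]; ring
    rcases eq_or_ne m l with rfl | hml
    · simp [hil, hil.symm, ha, hb]; ring
    rw [Equiv.swap_apply_of_ne_of_ne hmi hml]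
    simp [hmi, hml]
  have hzero : ∑ x ∈ Finset.range (a + b + 1), f x = 0 := by
    have h1 := Finset.sum_range_reflect (fun x : ℕ => f x) (a + b + 1)
    have h2 : ∑ x ∈ Finset.range (a + b + 1), f ((a + b + 1 - 1 - x : ℕ)) =
        - ∑ x ∈ Finset.range (a + b + 1), f x := by
      rw [← Finset.sum_neg_distrib]
      refine Finset.sum_congr rfl fun x hx => ?_
      rw [← hf]
      congr 1
      have := Finset.mem_range.1 hx
      omega
    omega
  rw [show a + b + 1 = a + (b + 1) by ring, Finset.sum_range_add, Finset.sum_range_succ'] at hzero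
  have e1 : ∑ k ∈ Finset.Icc 1 (c i).toNat, g (c - Pi.single i (k : ℤ) + Pi.single l (k : ℤ)) =
      ∑ x ∈ Finset.range a, f x := by
    rw [ha, Int.toNat_natCast]
    refine Finset.sum_nbij' (fun k => a - k) (fun x => a - x) ?_ ?_ ?_ ?_ ?_ <;> intro k hk <;>
      simp only [Finset.mem_Icc, Finset.mem_range] at hk ⊢
    · omega
    · omega
    · omega
    · omega
    · simp only [f]
      rw [Nat.cast_sub hk.2, sub_sub_cancel]
  have e2 : ∑ k ∈ Finset.Icc 1 (c l).toNat, g (c - Pi.single l (k : ℤ) + Pi.single i (k : ℤ)) =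
      ∑ x ∈ Finset.range b, f ((a + (x + 1) : ℕ)) := by
    rw [hb, Int.toNat_natCast]
    refine Finset.sum_nbij' (fun k => k - 1) (fun x => x + 1) ?_ ?_ ?_ ?_ ?_ <;> intro k hk <;>
      simp only [Finset.mem_Icc, Finset.mem_range] at hk ⊢
    · omega
    · omega
    · omega
    · omega
    · simp only [f]
      rw [Nat.sub_add_cancel hk.1]
      push_cast
      rw [sub_add_cancel_left, Pi.single_neg, Pi.single_neg]
      congr 1
      abel
  have e3 : f ((a + 0 : ℕ)) = g c := by simp [f]
  rw [e1, e2]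
  linarith

lemma two_mul_staircaseSum : 2 * staircaseSum N = N * (N - 1) := by
  have h := Finset.sum_range_id_mul_two N
  rw [staircaseSum, ← Finset.sum_range (fun i => (i : ℤ))]
  cases N with
  | zero => simp
  | succ m =>
    have : ((∑ i ∈ Finset.range (m + 1), i : ℕ) : ℤ) * 2 = ((m + 1 : ℕ) : ℤ) * (m : ℕ) := by
      exact_mod_cast h
    push_cast at this ⊢
    linarith

/-- Moving boxes from one entry to another: a discrete Euler identity for alternating functions. -/
lemma IsAlternating.sum_transfer {g : (Fin N → ℤ) → ℤ} (hg : IsAlternating g) {c : Fin N → ℤ}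
    (h0 : ∀ i, 0 ≤ c i) :
    ∑ i, ∑ k ∈ Finset.Icc 1 (c i).toNat, ∑ l, g (c - Pi.single i (k : ℤ) + Pi.single l (k : ℤ)) =
      (∑ i, c i - staircaseSum N) * g c := by
  let A : Fin N → Fin N → ℤ := fun i l =>
    ∑ k ∈ Finset.Icc 1 (c i).toNat, g (c - Pi.single i (k : ℤ) + Pi.single l (k : ℤ))
  have hA : ∑ i, ∑ k ∈ Finset.Icc 1 (c i).toNat,
      ∑ l, g (c - Pi.single i (k : ℤ) + Pi.single l (k : ℤ)) = ∑ i, ∑ l, A i l :=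
    Finset.sum_congr rfl fun i _ => Finset.sum_comm
  have hdiag : ∀ i, A i i = c i * g c := by
    intro i
    simp only [A, sub_add_cancel, Finset.sum_const, Nat.card_Icc, add_tsub_cancel_right,
      nsmul_eq_mul, Int.toNat_of_nonneg (h0 i)]
  have hpair : ∀ i l, A i l + A l i = (if i = l then (2 * c i + 1) * g c else 0) - g c := by
    intro i l
    split_ifs with h
    · subst h; rw [hdiag]; ring
    · rw [zero_sub]; exact hg.pair_sum h (h0 i) (h0 l)
  have h2 : 2 * ∑ i, ∑ l, A i l = ∑ i, ∑ l, (A i l + A l i) := by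
    simp only [Finset.sum_add_distrib]
    rw [Finset.sum_comm (f := fun i l => A l i)]
    ring
  rw [hA]
  have h3 : 2 * ∑ i, ∑ l, A i l = 2 * ((∑ i, c i - staircaseSum N) * g c) := by
    rw [h2]
    simp only [hpair, Finset.sum_sub_distrib, Finset.sum_ite_eq, Finset.mem_univ, if_true,
      Finset.sum_const, Finset.card_univ, Fintype.card_fin, nsmul_eq_mul]
    rw [← Finset.sum_mul, Finset.sum_add_distrib, ← Finset.mul_sum]
    simp only [Finset.sum_const, Finset.card_univ, Fintype.card_fin, nsmul_eq_mul]
    have := two_mul_staircaseSum (N := N)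
    linear_combination (g c) * this
  linarith

end Energy

section Orthogonality

variable {N : ℕ}

lemma IsAlternating.sum_add_single {g : (Fin N → ℤ) → ℤ} (hg : IsAlternating g) (k : ℤ) :
    IsAlternating (fun x => ∑ l, g (x + Pi.single l k)) := by
  intro τ x
  simp only [Finset.mul_sum]
  symm
  rw [← Equiv.sum_comp τ]
  refine Finset.sum_congr rfl fun l _ => ?_
  rw [← hg τ]
  congr 1
  ext m
  simp [Pi.single_apply]

/-- The exponent vector `(σ 0, …, σ (N - 1))`. -/
def staircase (σ : Equiv.Perm (Fin N)) : Fin N → ℤ := fun i => ((σ i : ℕ) : ℤ)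

/-- The alternating Kronecker delta of two exponent vectors. -/
noncomputable def kron (c d : Fin N → ℤ) : ℤ :=
  ∑ σ : Equiv.Perm (Fin N), if d = c ∘ σ then ((Equiv.Perm.sign σ : ℤˣ) : ℤ) else 0

lemma isAlternating_kron_left (d : Fin N → ℤ) : IsAlternating (fun c => kron c d) := by
  intro τ c
  simp only [kron, Finset.mul_sum]
  rw [← Equiv.sum_comp (Equiv.mulLeft τ⁻¹)]
  refine Finset.sum_congr rfl fun σ _ => ?_
  have : (c ∘ τ) ∘ (τ⁻¹ * σ : Equiv.Perm (Fin N)) = c ∘ σ := by ext; simp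
  simp only [Equiv.coe_mulLeft, this]
  split_ifs <;> simp

lemma kron_staircase_one (d : Fin N → ℤ) : kron (staircase 1) d = (alternant N).coeff d := by
  rw [coeff_alternant, kron]
  refine Finset.sum_congr rfl fun σ _ => ?_
  simp only [eq_comm (a := d)]
  rfl

lemma sum_kron_sub_single (c d : Fin N → ℤ) (k : ℤ) :
    ∑ j, kron c (d - Pi.single j k) = ∑ l, kron (c + Pi.single l k) d := by
  simp only [kron]
  rw [Finset.sum_comm, Finset.sum_comm (γ := Fin N)]
  refine Finset.sum_congr rfl fun σ _ => ?_
  symm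
  rw [← Equiv.sum_comp σ]
  refine Finset.sum_congr rfl fun j _ => ?_
  have : d - Pi.single j k = c ∘ σ ↔ d = (c + Pi.single (σ j) k) ∘ σ := by
    rw [sub_eq_iff_eq_add]
    have : (c + Pi.single (σ j) k) ∘ σ = c ∘ σ + Pi.single j k := by
      ext m
      simp [Pi.single_apply]
    rw [this]
  exact if_congr this.symm rfl rfl

/-- The antisymmetrisation of `numTables` in both arguments. -/
noncomputable def crossSum (n : ℕ) (c d : Fin N → ℤ) : ℤ :=
  ∑ σ : Equiv.Perm (Fin N), ∑ τ : Equiv.Perm (Fin N),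
    (((Equiv.Perm.sign σ : ℤˣ) : ℤ) * ((Equiv.Perm.sign τ : ℤˣ) : ℤ)) *
      numTables n (c - staircase σ) (d - staircase τ)

lemma sum_coeff_powerAlternant_mul (n : ℕ) (c d : Fin N → ℤ) :
    ∑ π : Equiv.Perm (Fin n), (powerAlternant N π.partition.parts).coeff c *
      (powerAlternant N π.partition.parts).coeff d = n.factorial * crossSum n c d := by
  simp only [powerAlternant_parts, coeff_alternant_mul, Finset.sum_mul_sum]
  simp only [crossSum, Finset.mul_sum]
  rw [Finset.sum_comm]
  refine Finset.sum_congr rfl fun σ _ => ?_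
  rw [Finset.sum_comm]
  refine Finset.sum_congr rfl fun τ _ => ?_
  have := sum_coeff_fixedWords_mul (n := n) (c - staircase σ) (d - staircase τ)
  rw [mul_left_comm, ← this, Finset.mul_sum]
  refine Finset.sum_congr rfl fun π _ => ?_
  simp only [staircase, Pi.sub_def]
  ring

lemma mul_crossSum (n : ℕ) (c d : Fin N → ℤ) :
    n * crossSum n c d = ∑ k ∈ Finset.Icc 1 n, ∑ i, ∑ j,
      crossSum (n - k) (c - Pi.single i (k : ℤ)) (d - Pi.single j (k : ℤ)) := by
  simp only [crossSum, Finset.mul_sum]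
  simp_rw [Finset.sum_comm (γ := Fin N) (s := Finset.univ) (t := (Finset.univ : Finset (Equiv.Perm (Fin N)))),
    Finset.sum_comm (s := Finset.Icc 1 n)]
  refine Finset.sum_congr rfl fun σ _ => Finset.sum_congr rfl fun τ _ => ?_
  rw [mul_left_comm, mul_numTables]
  simp only [Finset.mul_sum, sub_right_comm]
  rw [Finset.sum_comm]
  exact Finset.sum_congr rfl fun i _ => Finset.sum_comm

lemma numTables_zero (c d : Fin N → ℤ) :
    numTables 0 c d = (if c = 0 then 1 else 0) * (if d = 0 then 1 else 0) := by
  rw [numTables]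
  have : tables 0 c d = if c = 0 ∧ d = 0 then {0} else ∅ := by
    ext M
    rw [mem_tables]
    split_ifs with h
    · obtain ⟨rfl, rfl⟩ := h
      simp only [Finset.sum_eq_zero_iff, Finset.mem_univ, true_imp_iff, Finset.mem_singleton]
      constructor
      · rintro ⟨h, -⟩
        ext t; simp [h t]
      · rintro rfl
        simp
    · simp only [Finset.notMem_empty, iff_false]
      rintro ⟨h1, h2, h3⟩
      simp only [Finset.sum_eq_zero_iff, Finset.mem_univ, true_imp_iff] at h1
      refine h ⟨?_, ?_⟩
      · ext i; rw [← h2]; simp [h1]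
      · ext i; rw [← h3]; simp [h1]
  rw [this]
  split_ifs <;> simp_all

lemma crossSum_zero (c d : Fin N → ℤ) :
    crossSum 0 c d = (alternant N).coeff c * (alternant N).coeff d := by
  simp only [crossSum, numTables_zero, coeff_alternant, Finset.sum_mul_sum, sub_eq_zero]
  refine Finset.sum_congr rfl fun σ _ => Finset.sum_congr rfl fun τ _ => ?_
  have e : ∀ (σ : Equiv.Perm (Fin N)) (c : Fin N → ℤ),
    (c = staircase σ) = ((fun i => ((σ i : ℕ) : ℤ)) = c) := fun σ c => propext eq_comm
  simp only [e]
  split_ifs <;> simp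

lemma crossSum_eq (n : ℕ) (c d : Fin N → ℤ) :
    crossSum n c d =
      if (∀ i, 0 ≤ c i) ∧ ∑ i, c i = staircaseSum N + n then kron c d else 0 := by
  induction n using Nat.strong_induction_on generalizing c d with
  | _ n ih =>
  rcases Nat.eq_zero_or_pos n with rfl | hn
  · rw [crossSum_zero]
    split_ifs with h
    · by_cases hc : Function.Injective c
      · obtain ⟨ρ, rfl⟩ := exists_perm_of_sum_eq hc h.1 (by simpa using h.2)
        have h1 := isAlternating_kron_left d ρ (staircase 1)
        have h2 := isAlternating_alternant (N := N) ρ (staircase 1)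
        have h3 : (alternant N).coeff (staircase 1) = 1 := by
          rw [← kron_staircase_one, kron, Finset.sum_eq_single 1]
          · simp
          · intro b _ hb
            rw [if_neg]
            intro h
            apply hb
            ext i
            have := congrFun h i
            simp only [staircase, Function.comp, Equiv.Perm.one_apply] at this
            have : (i : ℕ) = b i := by exact_mod_cast this
            simp [this]
          · simp
        have e : (fun i => ((ρ i : ℕ) : ℤ)) = staircase 1 ∘ ρ := rfl
        simp only [e, h1, h2, h3, kron_staircase_one, mul_one]
      · have h1 : (alternant N).coeff c = 0 := by
          by_contra h; exact hc (isAlternating_alternant.injective_of_ne_zero h)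
        have h2 : kron c d = 0 := by
          by_contra h; exact hc ((isAlternating_kron_left d).injective_of_ne_zero h)
        rw [h1, h2, zero_mul]
    · have h1 : (alternant N).coeff c = 0 := by
        by_contra h1; exact h (by simpa using isSupportedOn_alternant c h1)
      rw [h1, zero_mul]
  have hn0 : (n : ℤ) ≠ 0 := by positivity
  apply mul_left_cancel₀ hn0
  rw [mul_crossSum]
  have hsum : ∀ i (k : ℤ), ∑ m, (c - Pi.single i k : Fin N → ℤ) m = ∑ m, c m - k := by
    intro i k; simp [Finset.sum_sub_distrib]
  have hrec : ∀ k ∈ Finset.Icc 1 n, ∀ i,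
      ∑ j, crossSum (n - k) (c - Pi.single i (k : ℤ)) (d - Pi.single j (k : ℤ)) =
      if (∀ m, 0 ≤ (c - Pi.single i (k : ℤ) : Fin N → ℤ) m) ∧ ∑ i, c i = staircaseSum N + n then
        ∑ l, kron (c - Pi.single i (k : ℤ) + Pi.single l (k : ℤ)) d else 0 := by
    intro k hk i
    rw [Finset.mem_Icc] at hk
    simp_rw [ih (n - k) (by omega), hsum]
    have : (∑ m, c m - k = staircaseSum N + (n - k : ℕ)) ↔ ∑ m, c m = staircaseSum N + n := by
      rw [Nat.cast_sub hk.2]; constructor <;> intro h <;> linarith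
    simp only [this]
    split_ifs
    · rw [sum_kron_sub_single]
    · simp
  rw [Finset.sum_congr rfl fun k hk => Finset.sum_congr rfl fun i _ => hrec k hk i]
  by_cases hc : (∀ i, 0 ≤ c i) ∧ ∑ i, c i = staircaseSum N + n
  swap
  · rw [if_neg hc, mul_zero]
    refine Finset.sum_eq_zero fun k _ => Finset.sum_eq_zero fun i _ => if_neg ?_
    rintro ⟨h1, h2⟩
    refine hc ⟨fun m => ?_, h2⟩
    have := h1 m
    simp only [Pi.sub_apply, Pi.single_apply] at this
    split_ifs at this <;> omega
  rw [if_pos hc]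
  obtain ⟨h0, hs⟩ := hc
  have := (isAlternating_kron_left d).sum_transfer h0
  rw [hs, add_sub_cancel_left] at this
  rw [← this, Finset.sum_comm]
  refine Finset.sum_congr rfl fun i _ => ?_
  have hiff : ∀ k : ℕ, ((∀ m, 0 ≤ (c - Pi.single i (k : ℤ) : Fin N → ℤ) m) ∧
      ∑ i, c i = staircaseSum N + n) ↔ k ≤ (c i).toNat := by
    intro k
    have := h0 i
    constructor
    · rintro ⟨h1, -⟩
      have := h1 i
      simp at this
      omega
    · intro h
      refine ⟨fun m => ?_, hs⟩
      have := h0 m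
      simp only [Pi.sub_apply, Pi.single_apply]
      split_ifs with hm
      · subst hm; omega
      · simpa
  simp_rw [hiff]
  rw [← Finset.sum_filter]
  apply Finset.sum_subset
  · intro k hk
    simp only [Finset.mem_filter, Finset.mem_Icc] at hk ⊢
    omega
  · intro k hk hk'
    simp only [Finset.mem_filter, Finset.mem_Icc] at hk hk'
    have hkn : n < k := by omega
    have hh := (isAlternating_kron_left d).sum_add_single (k : ℤ)
    by_contra hne
    have h1 := sum_range_le_sum_tuple (hh.injective_of_ne_zero hne) ((hiff k).2 hk.2).1
    rw [hsum] at h1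
    omega

end Orthogonality

section BetaSets

variable {N : ℕ}

/-- The increasing enumeration of a set of `N` natural numbers (and `0` for sets of a different
size). -/
noncomputable def enum (N : ℕ) (A : Finset ℕ) : Fin N → ℕ :=
  if h : A.card = N then A.orderEmbOfFin h else 0

lemma strictMono_enum {A : Finset ℕ} (h : A.card = N) : StrictMono (enum N A) := by
  rw [enum, dif_pos h]
  exact (A.orderEmbOfFin h).strictMono

lemma image_enum {A : Finset ℕ} (h : A.card = N) : Finset.univ.image (enum N A) = A := by
  rw [enum, dif_pos h]
  exact Finset.image_orderEmbOfFin_univ A h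

lemma enum_mem {A : Finset ℕ} (h : A.card = N) (i : Fin N) : enum N A i ∈ A := by
  rw [enum, dif_pos h]
  exact Finset.orderEmbOfFin_mem A h i

lemma card_image_of_strictMono {f : Fin N → ℕ} (hf : StrictMono f) :
    (Finset.univ.image f).card = N := by
  rw [Finset.card_image_of_injective _ hf.injective, Finset.card_univ, Fintype.card_fin]

lemma enum_image {f : Fin N → ℕ} (hf : StrictMono f) : enum N (Finset.univ.image f) = f := by
  have h := card_image_of_strictMono hf
  rw [enum, dif_pos h]
  exact (Finset.orderEmbOfFin_unique h (by simp) hf).symm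

lemma sum_enum {A : Finset ℕ} (h : A.card = N) : ∑ i, enum N A i = ∑ x ∈ A, x := by
  conv_rhs => rw [← image_enum h]
  rw [Finset.sum_image fun _ _ _ _ h' => (strictMono_enum h).injective h']

/-- Beta-sets: the sets of `N` natural numbers with sum `0 + 1 + ⋯ + (N - 1) + n`. -/
noncomputable def betaSets (N n : ℕ) : Finset (Finset ℕ) :=
  (Finset.range (∑ i : Fin N, (i : ℕ) + n + 1)).powerset.filter fun A =>
    A.card = N ∧ ∑ x ∈ A, x = ∑ i : Fin N, (i : ℕ) + n

lemma mem_betaSets {n : ℕ} {A : Finset ℕ} :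
    A ∈ betaSets N n ↔ A.card = N ∧ ∑ x ∈ A, x = ∑ i : Fin N, (i : ℕ) + n := by
  simp only [betaSets, Finset.mem_filter, Finset.mem_powerset, and_iff_right_iff_imp, and_imp]
  intro _ h x hx
  have := Finset.single_le_sum (f := fun x : ℕ => x) (fun _ _ => Nat.zero_le _) hx
  rw [Finset.mem_range]
  omega

lemma StrictMono.add_le_add_fin {f : Fin N → ℕ} (hf : StrictMono f) {i j : Fin N} (h : i ≤ j) :
    f i + j ≤ f j + i := by
  obtain ⟨d, hd⟩ : ∃ d : ℕ, (j : ℕ) = i + d := ⟨j - i, by have : (i : ℕ) ≤ j := h; omega⟩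
  induction d generalizing j with
  | zero =>
    have : i = j := Fin.ext hd.symm
    subst this; rfl
  | succ d ih =>
    let j' : Fin N := ⟨i + d, by have := j.2; omega⟩
    have hj' : j' < j := Fin.lt_def.2 (by simp only [j']; omega)
    have h1 : f i + (i + d) ≤ f j' + i := ih (j := j') (Fin.le_def.2 (by simp [j'])) rfl
    have h2 : f j' < f j := hf hj'
    omega

lemma StrictMono.le_apply_fin {f : Fin N → ℕ} (hf : StrictMono f) (i : Fin N) : (i : ℕ) ≤ f i := by
  have := hf.add_le_add_fin (i := ⟨0, i.pos⟩) (j := i) (Fin.le_def.2 (Nat.zero_le _))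
  simp only at this
  omega

lemma monotone_eq_of_map_eq {f g : Fin N → ℕ} (hf : Monotone f) (hg : Monotone g)
    (h : Multiset.map f Finset.univ.val = Multiset.map g Finset.univ.val) : f = g := by
  apply List.ofFn_injective
  refine List.Perm.eq_of_sortedLE (List.sortedLE_ofFn_iff.2 hf) (List.sortedLE_ofFn_iff.2 hg) ?_
  rw [← Multiset.coe_eq_coe]
  simpa only [Fin.univ_val_map] using h

/-- The partition attached to a beta-set: its parts are the nonzero numbers among `aᵢ - i`. -/
noncomputable def gaps (N : ℕ) (A : Finset ℕ) : Multiset ℕ :=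
  (Multiset.map (fun i : Fin N => enum N A i - i) Finset.univ.val).filter (0 < ·)

lemma gaps_sum {n : ℕ} {A : Finset ℕ} (hA : A ∈ betaSets N n) : (gaps N A).sum = n := by
  rw [mem_betaSets] at hA
  have h1 : (gaps N A).sum = ∑ i : Fin N, (enum N A i - i) := by
    rw [gaps]
    have := Multiset.filter_add_not (0 < ·)
      (Multiset.map (fun i : Fin N => enum N A i - i) Finset.univ.val)
    have h2 := congrArg Multiset.sum this
    rw [Multiset.sum_add] at h2
    rw [Finset.sum, ← h2]
    symm
    rw [add_eq_left, Multiset.sum_eq_zero]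
    intro x hx
    have := (Multiset.mem_filter.1 hx).2
    omega
  have h2 : ∑ i : Fin N, (enum N A i - i) + ∑ i : Fin N, (i : ℕ) = ∑ x ∈ A, x := by
    rw [← sum_enum hA.1, ← Finset.sum_add_distrib]
    refine Finset.sum_congr rfl fun i _ => ?_
    have := (strictMono_enum hA.1).le_apply_fin i
    omega
  omega

lemma gaps_injOn {A A' : Finset ℕ} (hA : A.card = N) (hA' : A'.card = N)
    (h : gaps N A = gaps N A') : A = A' := by
  have hmono : ∀ {A : Finset ℕ}, A.card = N → Monotone fun i : Fin N => enum N A i - i := by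
    intro A hA i j hij
    have h1 := (strictMono_enum hA).add_le_add_fin hij
    have h2 := (strictMono_enum hA).le_apply_fin i
    have h3 := (strictMono_enum hA).le_apply_fin j
    dsimp only
    omega
  have hdec : ∀ A : Finset ℕ, Multiset.map (fun i : Fin N => enum N A i - i) Finset.univ.val =
      gaps N A + Multiset.replicate (N - (gaps N A).card) 0 := by
    intro A
    have h1 := Multiset.filter_add_not (0 < ·)
      (Multiset.map (fun i : Fin N => enum N A i - i) Finset.univ.val)
    have h2 := congrArg Multiset.card h1
    rw [Multiset.card_add, Multiset.card_map] at h2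
    have h3 : (Finset.univ : Finset (Fin N)).val.card = N := by simp
    rw [← h1, gaps]
    refine congrArg₂ _ rfl ?_
    rw [Multiset.eq_replicate]
    constructor
    · omega
    · intro b hb
      have := (Multiset.mem_filter.1 hb).2
      omega
  have := monotone_eq_of_map_eq (hmono hA) (hmono hA') (by rw [hdec, hdec, h])
  rw [← image_enum hA, ← image_enum hA']
  congr 1
  ext i
  have h1 := congrFun this i
  have h2 := (strictMono_enum hA).le_apply_fin i
  have h3 := (strictMono_enum hA').le_apply_fin i
  omega

/-- `gaps`, bundled as a map to partitions. -/
noncomputable def gapsPartition {n : ℕ} (A : betaSets N n) : n.Partition where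
  parts := gaps N A
  parts_pos h := (Multiset.mem_filter.1 h).2
  parts_sum := gaps_sum A.2

lemma gapsPartition_surjective {n : ℕ} (h : n ≤ N) :
    Function.Surjective (gapsPartition : betaSets N n → n.Partition) := by
  intro p
  have hcard : p.parts.card ≤ n := by
    have := Multiset.card_nsmul_le_sum (s := p.parts) (a := 1) (fun x hx => p.parts_pos hx)
    rw [p.parts_sum] at this
    simpa using this
  let m : Multiset ℕ := p.parts + Multiset.replicate (N - p.parts.card) 0
  have hm : (m.sort (· ≤ ·)).length = N := by
    simp [m]; omega
  let f : Fin N → ℕ := fun i => (m.sort (· ≤ ·)).get (i.cast hm.symm)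
  have hf : Monotone f := fun i j hij => by
    have := (Multiset.pairwise_sort m (· ≤ ·)).sortedLE.monotone_get
    exact this (by simpa using hij)
  have hfm : Multiset.map f Finset.univ.val = m := by
    rw [Fin.univ_val_map]
    conv_rhs => rw [← Multiset.sort_eq m (· ≤ ·)]
    congr 1
    apply List.ext_get
    · simp [hm]
    · intro i h1 h2
      simp [f]
  have hs : StrictMono fun i : Fin N => f i + i := fun i j hij => by
    have := hf hij.le
    have : (i : ℕ) < j := hij
    dsimp only
    omega
  let A := Finset.univ.image fun i : Fin N => f i + i
  have hA : A ∈ betaSets N n := by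
    rw [mem_betaSets]
    refine ⟨card_image_of_strictMono hs, ?_⟩
    rw [Finset.sum_image fun _ _ _ _ h' => hs.injective h', Finset.sum_add_distrib, add_comm]
    congr 1
    rw [Finset.sum, hfm]
    simp [m, p.parts_sum]
  refine ⟨⟨A, hA⟩, ?_⟩
  ext1
  simp only [gapsPartition, gaps, A, enum_image hs, Nat.add_sub_cancel]
  rw [hfm, Multiset.filter_add]
  have h1 : p.parts.filter (0 < ·) = p.parts := Multiset.filter_eq_self.2 fun x hx => p.parts_pos hx
  have h2 : (Multiset.replicate (N - p.parts.card) 0).filter (0 < ·) = 0 := by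
    rw [Multiset.filter_eq_nil]
    intro a ha
    have := Multiset.eq_of_mem_replicate ha
    omega
  rw [h1, h2, add_zero]

lemma le_card_betaSets {N n : ℕ} (h : n ≤ N) : Fintype.card n.Partition ≤ (betaSets N n).card := by
  rw [← Fintype.card_coe]
  exact Fintype.card_le_of_surjective _ (gapsPartition_surjective h)

end BetaSets

section Irreducibles

variable {N n : ℕ}

lemma charInner_vchar (c d : Fin N → ℤ) :
    charInner (vchar N n c) (vchar N n d) =
      ((if (∀ i, 0 ≤ c i) ∧ ∑ i, c i = staircaseSum N + n then kron c d else 0 : ℤ) : ℂ) := by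
  have h := congrArg (Int.cast (R := ℂ)) (sum_coeff_powerAlternant_mul n c d)
  rw [crossSum_eq] at h
  have hn : (n.factorial : ℂ) ≠ 0 := by exact_mod_cast n.factorial_ne_zero
  simp only [charInner, vchar_inv]
  rw [Nat.card_eq_fintype_card, Fintype.card_perm, Fintype.card_fin, inv_mul_eq_iff_eq_mul₀ hn]
  simp only [vchar]
  push_cast at h ⊢
  exact h

/-- The increasing exponent vector with entries the elements of `A`. -/
noncomputable def expVec (N : ℕ) (A : Finset ℕ) : Fin N → ℤ := fun i => (enum N A i : ℤ)

lemma expVec_injective {A : Finset ℕ} (hA : A.card = N) : Function.Injective (expVec N A) :=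
  fun _ _ h => (strictMono_enum hA).injective (by simpa [expVec] using h)

lemma sum_expVec {A : Finset ℕ} (hA : A ∈ betaSets N n) :
    ∑ i, expVec N A i = staircaseSum N + n := by
  rw [mem_betaSets] at hA
  have := sum_enum hA.1
  rw [hA.2] at this
  simp only [expVec, staircaseSum]
  exact_mod_cast this

lemma kron_expVec {A A' : Finset ℕ} (hA : A.card = N) (hA' : A'.card = N) :
    kron (expVec N A) (expVec N A') = if A = A' then 1 else 0 := by
  rw [kron]
  split_ifs with h
  · subst h
    rw [Finset.sum_eq_single 1]
    · simp
    · intro σ _ hσ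
      rw [if_neg]
      intro h
      apply hσ
      ext i
      have := expVec_injective hA (congrFun h i)
      simp [← this]
    · simp
  · refine Finset.sum_eq_zero fun σ _ => if_neg fun h1 => h ?_
    rw [← image_enum hA, ← image_enum hA']
    ext x
    simp only [Finset.mem_image, Finset.mem_univ, true_and]
    have h2 : ∀ i, enum N A' i = enum N A (σ i) := fun i => by
      have := congrFun h1 i
      simp only [expVec, Function.comp] at this
      exact_mod_cast this
    constructor
    · rintro ⟨i, rfl⟩
      exact ⟨σ⁻¹ i, by simp [h2]⟩
    · rintro ⟨i, rfl⟩
      exact ⟨σ i, by simp [h2]⟩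

/-- The virtual character of a beta-set. -/
noncomputable def bchar (N n : ℕ) (A : Finset ℕ) : Equiv.Perm (Fin n) → ℂ :=
  vchar N n (expVec N A)

lemma charInner_bchar {A A' : Finset ℕ} (hA : A ∈ betaSets N n) (hA' : A'.card = N) :
    charInner (bchar N n A) (bchar N n A') = if A = A' then 1 else 0 := by
  rw [bchar, bchar, charInner_vchar, if_pos ⟨fun i => Int.natCast_nonneg _, sum_expVec hA⟩,
    kron_expVec (mem_betaSets.1 hA).1 hA']
  split_ifs <;> simp

lemma exists_sign_bchar {A : Finset ℕ} (hA : A ∈ betaSets N n) :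
    ∃ s : ℤ, (s = 1 ∨ s = -1) ∧ IsIrrChar (Equiv.Perm (Fin n)) (s • bchar N n A) :=
  exists_isIrrChar_of_charInner_self (vchar_mem_span _)
    (by rw [charInner_bchar hA (mem_betaSets.1 hA).1, if_pos rfl])

/-- The sign making `bchar N n A` an irreducible character. -/
noncomputable def bsign (N n : ℕ) (A : Finset ℕ) : ℤ :=
  if IsIrrChar (Equiv.Perm (Fin n)) (bchar N n A) then 1 else -1

lemma bsign_mul_self (A : Finset ℕ) : bsign N n A * bsign N n A = 1 := by
  rw [bsign]; split_ifs <;> rfl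

lemma bsign_ne_zero (A : Finset ℕ) : bsign N n A ≠ 0 := by
  rw [bsign]; split_ifs <;> decide

/-- The irreducible character of a beta-set. -/
noncomputable def irrChar (N n : ℕ) (A : Finset ℕ) : Equiv.Perm (Fin n) → ℂ :=
  ((bsign N n A : ℤ) : ℂ) • bchar N n A

lemma isIrrChar_irrChar {A : Finset ℕ} (hA : A ∈ betaSets N n) :
    IsIrrChar (Equiv.Perm (Fin n)) (irrChar N n A) := by
  rw [irrChar, bsign]
  split_ifs with h
  · simpa using h
  · obtain ⟨s, rfl | rfl, hs⟩ := exists_sign_bchar hA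
    · exact absurd (by simpa using hs) h
    · simpa using hs

lemma charInner_irrChar {A A' : Finset ℕ} (hA : A ∈ betaSets N n) (hA' : A' ∈ betaSets N n) :
    charInner (irrChar N n A) (irrChar N n A') = if A = A' then 1 else 0 := by
  rw [irrChar, irrChar, charInner_smul_left, charInner_smul_right,
    charInner_bchar hA (mem_betaSets.1 hA').1]
  split_ifs with h
  · subst h
    rw [mul_one]
    exact_mod_cast bsign_mul_self A
  · simp

lemma irrChar_injOn {A A' : Finset ℕ} (hA : A ∈ betaSets N n) (hA' : A' ∈ betaSets N n)
    (h : irrChar N n A = irrChar N n A') : A = A' := by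
  by_contra hne
  have h1 := charInner_irrChar hA hA'
  rw [if_neg hne, h, charInner_irrChar hA' hA', if_pos rfl] at h1
  exact one_ne_zero h1

/-- The cycle type of `π`, as a partition of `n`. -/
def cycleParts (π : Equiv.Perm (Fin n)) : n.Partition where
  parts := π.partition.parts
  parts_pos h := π.partition.parts_pos h
  parts_sum := parts_sum π

/-- The space of functions depending only on the cycle type. -/
noncomputable def classFun (n : ℕ) : Submodule ℂ (Equiv.Perm (Fin n) → ℂ) :=
  LinearMap.range (LinearMap.funLeft ℂ ℂ (cycleParts (n := n)))

lemma mem_classFun {f : Equiv.Perm (Fin n) → ℂ}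
    (h : ∀ π π', π.partition = π'.partition → f π = f π') : f ∈ classFun n := by
  rw [classFun, LinearMap.mem_range]
  refine ⟨fun p => if hp : ∃ π, cycleParts π = p then f hp.choose else 0, ?_⟩
  ext π
  rw [LinearMap.funLeft_apply]
  have hp : ∃ π', cycleParts π' = cycleParts π := ⟨π, rfl⟩
  rw [dif_pos hp]
  apply h
  have h1 : (cycleParts hp.choose).parts = (cycleParts π).parts := by rw [hp.choose_spec]
  exact Nat.Partition.ext h1

lemma IsIrrChar.eq_of_partition_eq {f : Equiv.Perm (Fin n) → ℂ} (hf : IsIrrChar _ f)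
    (π π' : Equiv.Perm (Fin n)) (h : π.partition = π'.partition) : f π = f π' := by
  obtain ⟨V, -, rfl⟩ := hf
  obtain ⟨g, rfl⟩ := isConj_iff.1 (Equiv.Perm.partition_eq_of_isConj.2 h)
  exact (V.char_conj _ _).symm

lemma linearIndependent_of_charInner {G : Type} [Group G] [Fintype G] {ι : Type*} [DecidableEq ι]
    (v : ι → G → ℂ) (h : ∀ i j, charInner (v i) (v j) = if i = j then 1 else 0) :
    LinearIndependent ℂ v := by
  rw [linearIndependent_iff']
  intro s g hg i hi
  have h1 := congrArg (fun f => charInner f (v i)) hg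
  simp only [charInner_sum_left, charInner_smul_left, h] at h1
  rw [Finset.sum_eq_single i] at h1
  · simpa [charInner] using h1
  · intro j _ hj; simp [hj]
  · exact fun h => absurd hi h

lemma exists_irrChar_eq (hnN : n ≤ N) {f : Equiv.Perm (Fin n) → ℂ} (hf : IsIrrChar _ f) :
    ∃ A ∈ betaSets N n, f = irrChar N n A := by
  by_contra! hne
  let v : Option (betaSets N n) → Equiv.Perm (Fin n) → ℂ := fun o =>
    o.elim f fun A => irrChar N n A
  have hv : ∀ o, IsIrrChar _ (v o) := by
    rintro (_ | A)
    · exact hf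
    · exact isIrrChar_irrChar A.2
  have hinj : Function.Injective v := by
    rintro (_ | A) (_ | A') h
    · rfl
    · exact absurd h (hne A' A'.2)
    · exact absurd h.symm (hne A A.2)
    · rw [Subtype.ext (irrChar_injOn A.2 A'.2 h)]
  have hli : LinearIndependent ℂ v := linearIndependent_of_charInner v fun i j => by
    rw [(hv i).charInner_eq (hv j)]
    split_ifs with h1 h2 h2
    · rfl
    · exact absurd (hinj h1) h2
    · exact absurd (congrArg v h2) h1
    · rfl
  let w : Option (betaSets N n) → classFun n := fun o =>
    ⟨v o, mem_classFun (hv o).eq_of_partition_eq⟩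
  have hw : LinearIndependent ℂ w := by
    apply LinearIndependent.of_comp (classFun n).subtype
    exact hli
  have h1 := hw.fintype_card_le_finrank
  have h2 : Module.finrank ℂ (classFun n) ≤ Fintype.card n.Partition := by
    refine (LinearMap.finrank_range_le _).trans ?_
    rw [Module.finrank_fintype_fun_eq_card]
  rw [Fintype.card_option, Fintype.card_coe] at h1
  have := le_card_betaSets hnN
  omega

end Irreducibles

section SignTwist

variable {N n : ℕ}

/-- The numbers `0, …, 2N - 1`, the lower half in increasing and the upper half in decreasing
order. -/
def foldPos (x : Fin N ⊕ Fin N) : ℤ :=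
  Sum.elim (fun i : Fin N => ((i : ℕ) : ℤ)) (fun i : Fin N => 2 * N - 1 - ((i : ℕ) : ℤ)) x

@[simp] lemma foldPos_inl (i : Fin N) : foldPos (Sum.inl i) = ((i : ℕ) : ℤ) := rfl

@[simp] lemma foldPos_inr (i : Fin N) : foldPos (Sum.inr i) = 2 * N - 1 - ((i : ℕ) : ℤ) := rfl

lemma foldPos_injective : Function.Injective (foldPos (N := N)) := by
  rintro (i | i) (j | j) h <;> simp only [foldPos_inl, foldPos_inr] at h
  · congr; ext; omega
  · omega
  · omega
  · congr; ext; omega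

lemma foldPos_nonneg (x : Fin N ⊕ Fin N) : 0 ≤ foldPos x := by
  rcases x with i | i <;> simp only [foldPos_inl, foldPos_inr] <;> omega

lemma foldPos_lt (x : Fin N ⊕ Fin N) : foldPos x < 2 * N := by
  rcases x with i | i <;> simp only [foldPos_inl, foldPos_inr] <;> omega

lemma exists_foldPos {p : ℤ} (h0 : 0 ≤ p) (h1 : p < 2 * N) :
    ∃ x : Fin N ⊕ Fin N, foldPos x = p := by
  by_cases h : p < N
  · refine ⟨Sum.inl ⟨p.toNat, by omega⟩, ?_⟩
    simp [h0]
  · refine ⟨Sum.inr ⟨(2 * N - 1 - p).toNat, by omega⟩, ?_⟩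
    simp only [foldPos_inr]
    omega

/-- `f` and `g` correspond, up to the sign `κ`, under complementation and reversal of exponents. -/
def IsDual (κ : ℤ) (f g : (Fin N → ℤ) → ℤ) : Prop :=
  ∀ w : Equiv.Perm (Fin N ⊕ Fin N), f (fun i => foldPos (w (Sum.inl i))) =
    κ * ((Equiv.Perm.sign w : ℤˣ) : ℤ) * g (fun i => 2 * N - 1 - foldPos (w (Sum.inr i)))

lemma coeff_alternant_staircase (σ : Equiv.Perm (Fin N)) :
    (alternant N).coeff (staircase σ) = ((Equiv.Perm.sign σ : ℤˣ) : ℤ) := by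
  rw [coeff_alternant, Finset.sum_eq_single σ]
  · exact if_pos rfl
  · intro τ _ hτ
    rw [if_neg]
    intro h
    apply hτ
    ext i
    have := congrFun h i
    simp only [staircase] at this
    exact_mod_cast this
  · simp

lemma exists_staircase_of_coeff_alternant_ne_zero {c : Fin N → ℤ} (h : (alternant N).coeff c ≠ 0) :
    ∃ σ, c = staircase σ := by
  rw [coeff_alternant] at h
  obtain ⟨σ, -, hσ⟩ := Finset.exists_ne_zero_of_sum_ne_zero h
  refine ⟨σ, ?_⟩
  by_contra h
  exact hσ (if_neg fun h' => h h'.symm)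

lemma isDual_alternant : IsDual 1 (alternant N).coeff (alternant N).coeff := by
  intro w
  by_cases hw : Set.MapsTo w (Set.range Sum.inl) (Set.range Sum.inl)
  · obtain ⟨⟨σ, τ⟩, rfl⟩ := Equiv.Perm.mem_sumCongrHom_range_of_perm_mapsTo_inl hw
    have h1 : (fun i => foldPos (Equiv.Perm.sumCongrHom (Fin N) (Fin N) (σ, τ) (Sum.inl i))) =
        staircase σ := by ext i; simp [staircase]
    have h2 : (fun i => 2 * N - 1 - foldPos
        (Equiv.Perm.sumCongrHom (Fin N) (Fin N) (σ, τ) (Sum.inr i))) = staircase τ := by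
      ext i; simp [staircase]
    have h3 : Equiv.Perm.sign (Equiv.Perm.sumCongrHom (Fin N) (Fin N) (σ, τ)) =
        Equiv.Perm.sign σ * Equiv.Perm.sign τ := by
      rw [← Equiv.Perm.sign_sumCongr]
      rfl
    rw [h1, h2, h3, coeff_alternant_staircase, coeff_alternant_staircase]
    push_cast
    have := Int.units_coe_mul_self (Equiv.Perm.sign τ)
    rw [one_mul, mul_assoc, this, mul_one]
  · have h1 : (alternant N).coeff (fun i => foldPos (w (Sum.inl i))) = 0 := by
      by_contra h
      obtain ⟨σ, hσ⟩ := exists_staircase_of_coeff_alternant_ne_zero h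
      apply hw
      rintro _ ⟨i, rfl⟩
      refine ⟨σ i, foldPos_injective ?_⟩
      exact (congrFun hσ i).symm
    have h2 : (alternant N).coeff (fun i => 2 * N - 1 - foldPos (w (Sum.inr i))) = 0 := by
      by_contra h
      obtain ⟨σ, hσ⟩ := exists_staircase_of_coeff_alternant_ne_zero h
      apply hw
      rintro _ ⟨i, rfl⟩
      rcases hx : w (Sum.inl i) with x | x
      · exact ⟨x, rfl⟩
      · exfalso
        have h1 := congrFun hσ (σ⁻¹ x)
        rw [staircase, show σ (σ⁻¹ x) = x by simp] at h1
        have h2 : w (Sum.inr (σ⁻¹ x)) = Sum.inr x := foldPos_injective (by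
          rw [foldPos_inr]; linarith)
        rw [← hx] at h2
        simpa using w.injective h2
    rw [h1, h2, mul_zero]

lemma IsDual.powerSum_mul {κ : ℤ} {f g : LaurentAlg N} {s t : ℤ} (h : IsDual κ f.coeff g.coeff)
    (hf : IsAlternating f.coeff) (hg : IsAlternating g.coeff) (hfs : IsSupportedOn s f.coeff)
    (hgs : IsSupportedOn t g.coeff) {k : ℕ} (hk : 0 < k) :
    IsDual (-κ) (powerSum N k * f).coeff (powerSum N k * g).coeff := by
  intro w
  set c : Fin N → ℤ := fun i => foldPos (w (Sum.inl i)) with hc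
  set d : Fin N → ℤ := fun i => 2 * N - 1 - foldPos (w (Sum.inr i)) with hd
  rw [coeff_powerSum_mul, coeff_powerSum_mul]
  have key1 : ∀ i, f.coeff (c - Pi.single i (k : ℤ)) =
      ∑ j, if c i = foldPos (w (Sum.inr j)) + k then f.coeff (c - Pi.single i (k : ℤ)) else 0 := by
    intro i
    by_cases hj : ∃ j, c i = foldPos (w (Sum.inr j)) + k
    · obtain ⟨j, hj⟩ := hj
      rw [Finset.sum_eq_single j, if_pos hj]
      · intro j' _ hj'
        rw [if_neg]
        intro h'
        apply hj'
        have : foldPos (w (Sum.inr j')) = foldPos (w (Sum.inr j)) := by linarith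
        simpa using w.injective (foldPos_injective this)
      · simp
    · have hj' : ∀ j, ¬ c i = foldPos (w (Sum.inr j)) + k := fun j h => hj ⟨j, h⟩
      simp only [hj', if_false, Finset.sum_const_zero]
      by_contra hne
      have h0 := (hfs _ hne).1 i
      simp only [Pi.sub_apply, Pi.single_eq_same] at h0
      obtain ⟨x, hx⟩ := exists_foldPos (N := N) h0
        (by have := foldPos_lt (w (Sum.inl i)); simp only [hc]; omega)
      obtain ⟨y, rfl⟩ := w.surjective x
      rcases y with i' | j
      · have hne' : i' ≠ i := by
          rintro rfl
          simp only [hc] at hx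
          omega
        have := hf.injective_of_ne_zero hne (a₁ := i') (a₂ := i) (by
          simp only [Pi.sub_apply, Pi.single_eq_same, Pi.single_eq_of_ne hne', sub_zero]
          exact hx)
        exact hne' this
      · exact hj' j (by linarith)
  have key2 : ∀ j, g.coeff (d - Pi.single j (k : ℤ)) =
      ∑ i, if c i = foldPos (w (Sum.inr j)) + k then g.coeff (d - Pi.single j (k : ℤ)) else 0 := by
    intro j
    by_cases hi : ∃ i, c i = foldPos (w (Sum.inr j)) + k
    · obtain ⟨i, hi⟩ := hi
      rw [Finset.sum_eq_single i, if_pos hi]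
      · intro i' _ hi'
        rw [if_neg]
        intro h'
        apply hi'
        have : foldPos (w (Sum.inl i')) = foldPos (w (Sum.inl i)) := by
          simp only [hc] at h' hi; linarith
        simpa using w.injective (foldPos_injective this)
      · simp
    · have hi' : ∀ i, ¬ c i = foldPos (w (Sum.inr j)) + k := fun i h => hi ⟨i, h⟩
      simp only [hi', if_false, Finset.sum_const_zero]
      by_contra hne
      have h0 := (hgs _ hne).1 j
      simp only [Pi.sub_apply, Pi.single_eq_same, hd] at h0
      obtain ⟨x, hx⟩ := exists_foldPos (N := N) (p := foldPos (w (Sum.inr j)) + k)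
        (by have := foldPos_nonneg (w (Sum.inr j)); omega) (by omega)
      obtain ⟨y, rfl⟩ := w.surjective x
      rcases y with i | j'
      · exact hi' i hx
      · have hne' : j' ≠ j := by
          rintro rfl
          omega
        have := hg.injective_of_ne_zero hne (a₁ := j') (a₂ := j) (by
          simp only [Pi.sub_apply, Pi.single_eq_same, Pi.single_eq_of_ne hne', sub_zero, hd]
          linarith)
        exact hne' this
  rw [Finset.sum_congr rfl fun i _ => key1 i, Finset.sum_congr rfl fun j _ => key2 j,
    Finset.sum_comm, Finset.mul_sum]
  refine Finset.sum_congr rfl fun j _ => ?_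
  rw [Finset.mul_sum]
  refine Finset.sum_congr rfl fun i _ => ?_
  split_ifs with hij
  · have h1 := h (w * Equiv.swap (Sum.inl i) (Sum.inr j))
    have e1 : (fun i' => foldPos ((w * Equiv.swap (Sum.inl i) (Sum.inr j)) (Sum.inl i'))) =
        c - Pi.single i (k : ℤ) := by
      ext i'
      simp only [Equiv.Perm.mul_apply, Pi.sub_apply]
      rcases eq_or_ne i' i with rfl | hne
      · rw [Equiv.swap_apply_left, Pi.single_eq_same]; linarith
      · rw [Equiv.swap_apply_of_ne_of_ne (by simpa using hne) (by simp), Pi.single_eq_of_ne hne,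
          sub_zero]
    have e2 : (fun j' => 2 * N - 1 - foldPos
        ((w * Equiv.swap (Sum.inl i) (Sum.inr j)) (Sum.inr j'))) = d - Pi.single j (k : ℤ) := by
      ext j'
      simp only [Equiv.Perm.mul_apply, Pi.sub_apply, hd]
      rcases eq_or_ne j' j with rfl | hne
      · rw [Equiv.swap_apply_right, Pi.single_eq_same]
        simp only [hc] at hij
        linarith
      · rw [Equiv.swap_apply_of_ne_of_ne (by simp) (by simpa using hne), Pi.single_eq_of_ne hne,
          sub_zero]
    rw [e1, e2, Equiv.Perm.sign_mul, Equiv.Perm.sign_swap (by simp)] at h1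
    rw [h1]
    push_cast
    ring
  · simp

lemma isDual_powerAlternant (m : Multiset ℕ) (hm : ∀ k ∈ m, 0 < k) :
    IsDual ((-1) ^ m.card) (powerAlternant N m).coeff (powerAlternant N m).coeff := by
  induction m using Multiset.induction_on with
  | empty => rw [powerAlternant_zero]; simpa using isDual_alternant
  | cons k m ih =>
    rw [powerAlternant_cons, Multiset.card_cons, pow_succ, mul_neg_one]
    exact (ih fun k hk => hm k (Multiset.mem_cons_of_mem hk)).powerSum_mul
      (isAlternating_powerAlternant m) (isAlternating_powerAlternant m)
      (isSupportedOn_powerAlternant m) (isSupportedOn_powerAlternant m)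
      (hm k (Multiset.mem_cons_self k m))

lemma neg_one_pow_card_parts (π : Equiv.Perm (Fin n)) :
    (-1 : ℤ) ^ π.partition.parts.card = (-1) ^ n * ((Equiv.Perm.sign π : ℤˣ) : ℤ) := by
  have h1 : π.support.card ≤ n := by simpa using Finset.card_le_univ π.support
  rw [Equiv.Perm.parts_partition, Multiset.card_add, Multiset.card_replicate,
    Equiv.Perm.sign_of_cycleType, Equiv.Perm.sum_cycleType, Fintype.card_fin]
  push_cast
  rw [← pow_add]
  apply neg_one_pow_congr
  simp only [Nat.even_add, Nat.even_sub h1]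
  tauto

lemma vchar_foldPos (w : Equiv.Perm (Fin N ⊕ Fin N)) (π : Equiv.Perm (Fin n)) :
    vchar N n (fun i => foldPos (w (Sum.inl i))) π =
      ((-1) ^ n * ((Equiv.Perm.sign w : ℤˣ) : ℤ) : ℤ) * (((Equiv.Perm.sign π : ℤˣ) : ℤ) *
        vchar N n (fun i => 2 * N - 1 - foldPos (w (Sum.inr i))) π) := by
  have h := isDual_powerAlternant (N := N) π.partition.parts (fun k hk => π.partition.parts_pos hk) w
  rw [neg_one_pow_card_parts] at h
  rw [vchar, vchar, h]
  push_cast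
  ring

lemma lt_two_mul_of_mem_betaSets (hnN : n ≤ N) {A : Finset ℕ} (hA : A ∈ betaSets N n) {p : ℕ}
    (hp : p ∈ A) : p < 2 * N := by
  rw [← image_enum (mem_betaSets.1 hA).1] at hp
  obtain ⟨i, -, rfl⟩ := Finset.mem_image.1 hp
  have h2 : ∑ j : Fin N, (j : ℕ) + (enum N A i - i) ≤ ∑ j : Fin N, enum N A j := by
    have h3 := Finset.single_le_sum (f := fun j : Fin N => enum N A j - j)
      (fun _ _ => Nat.zero_le _) (Finset.mem_univ i)
    have h4 : ∑ j : Fin N, (j : ℕ) + ∑ j : Fin N, (enum N A j - j) = ∑ j : Fin N, enum N A j := by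
      rw [← Finset.sum_add_distrib]
      refine Finset.sum_congr rfl fun j _ => ?_
      have := (strictMono_enum (mem_betaSets.1 hA).1).le_apply_fin j
      omega
    omega
  rw [sum_enum (mem_betaSets.1 hA).1, (mem_betaSets.1 hA).2] at h2
  have := i.2
  omega

lemma mem_iff_notMem_of_sign_mul_eq (hnN : n ≤ N) {A : Finset ℕ} (hA : A ∈ betaSets N n)
    (h : (fun π => ((Equiv.Perm.sign π : ℤ) : ℂ) * irrChar N n A π) = irrChar N n A) {p : ℕ}
    (hp : p < 2 * N) : p ∈ A ↔ 2 * N - 1 - p ∉ A := by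
  have hA1 := (mem_betaSets.1 hA).1
  have hu : ∀ i : Fin N, ∃ x : Fin N ⊕ Fin N, foldPos x = expVec N A i := fun i =>
    exists_foldPos (Int.natCast_nonneg _)
      (by simpa [expVec] using by exact_mod_cast lt_two_mul_of_mem_betaSets hnN hA (enum_mem hA1 i))
  choose u hu using hu
  obtain ⟨g, hg⟩ := Set.MapsTo.exists_equiv_extend_of_card_eq
    (α := Fin N ⊕ Fin N) (t := (Finset.univ : Finset (Fin N ⊕ Fin N))) (by simp)
    (s := Set.range Sum.inl) (f := Sum.elim u u) (by intro; simp) (by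
      rintro _ ⟨i, rfl⟩ _ ⟨j, rfl⟩ hij
      simp only [Sum.elim_inl] at hij
      exact congrArg Sum.inl (expVec_injective hA1 (by rw [← hu, ← hu, hij])))
  let w : Equiv.Perm (Fin N ⊕ Fin N) := g.trans (Equiv.subtypeUnivEquiv (by simp))
  have hw : ∀ i, foldPos (w (Sum.inl i)) = expVec N A i := fun i => by
    rw [← hu]
    exact congrArg foldPos (hg (Sum.inl i) ⟨i, rfl⟩)
  set d : Fin N → ℤ := fun i => 2 * N - 1 - foldPos (w (Sum.inr i)) with hd
  have hbs : (fun π => ((Equiv.Perm.sign π : ℤ) : ℂ) * bchar N n A π) = bchar N n A := by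
    have hne : ((bsign N n A : ℤ) : ℂ) ≠ 0 := by exact_mod_cast bsign_ne_zero A
    ext π
    have := congrFun h π
    simp only [irrChar, Pi.smul_apply, smul_eq_mul] at this
    apply mul_left_cancel₀ hne
    linear_combination this
  have hdual : ∀ π, bchar N n A π = (((-1) ^ n * ((Equiv.Perm.sign w : ℤˣ) : ℤ) : ℤ) : ℂ) *
      vchar N n d π := by
    intro π
    have h1 := vchar_foldPos w π
    simp_rw [hw] at h1
    have h2 := congrFun hbs π
    have h3 : (((Equiv.Perm.sign π : ℤˣ) : ℤ) : ℂ) * ((Equiv.Perm.sign π : ℤˣ) : ℤ) = 1 := by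
      exact_mod_cast Int.units_coe_mul_self (Equiv.Perm.sign π)
    change ((Equiv.Perm.sign π : ℤ) : ℂ) * vchar N n (expVec N A) π = vchar N n (expVec N A) π at h2
    change vchar N n (expVec N A) π = _
    have h4 : vchar N n (fun i => expVec N A i) π = vchar N n (expVec N A) π := rfl
    rw [h4] at h1
    rw [← h2, h1]
    simp only [hd]
    linear_combination (((-1) ^ n * ((Equiv.Perm.sign w : ℤˣ) : ℤ) : ℤ) : ℂ) *
      vchar N n (fun i => 2 * N - 1 - foldPos (w (Sum.inr i))) π * h3
  have hk : kron (expVec N A) d ≠ 0 := by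
    intro h0
    have h1 := charInner_bchar (n := n) hA hA1
    have h2 : bchar N n A = (((-1) ^ n * ((Equiv.Perm.sign w : ℤˣ) : ℤ) : ℤ) : ℂ) • vchar N n d :=
      funext hdual
    nth_rewrite 2 [h2] at h1
    rw [charInner_smul_right, bchar, charInner_vchar, h0] at h1
    simp at h1
  obtain ⟨σ, -, hσ⟩ := Finset.exists_ne_zero_of_sum_ne_zero hk
  have hσ : d = expVec N A ∘ σ := by
    by_contra h'
    exact hσ (if_neg h')
  have hmem : ∀ q : ℕ, q ∈ A ↔ ∃ i, expVec N A i = q := fun q => by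
    conv_lhs => rw [← image_enum hA1]
    simp [expVec]
  have hmem' : ∀ q : ℕ, q ∈ A ↔ ∃ i, d i = q := fun q => by
    rw [hmem, hσ]
    exact ⟨fun ⟨i, hi⟩ => ⟨σ⁻¹ i, by simpa using hi⟩, fun ⟨i, hi⟩ => ⟨σ i, hi⟩⟩
  have hcast : ((2 * N - 1 - p : ℕ) : ℤ) = 2 * N - 1 - p := by omega
  obtain ⟨x, hx⟩ := exists_foldPos (N := N) (p := p) (by positivity) (by omega)
  obtain ⟨y, rfl⟩ := w.surjective x
  constructor
  · intro h1 h2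
    obtain ⟨i, hi⟩ := (hmem p).1 h1
    obtain ⟨j, hj⟩ := (hmem' _).1 h2
    rw [← hw] at hi
    simp only [hd] at hj
    have : foldPos (w (Sum.inl i)) = foldPos (w (Sum.inr j)) := by omega
    simpa using w.injective (foldPos_injective this)
  · intro h1
    rcases y with i | j
    · exact (hmem p).2 ⟨i, by rw [← hw, hx]⟩
    · exact absurd ((hmem' _).2 ⟨j, by simp only [hd]; omega⟩) h1

end SignTwist

section Projective

variable {N n : ℕ}

/-- Exponent vectors all of whose entries are even or equal to `2N - 1`. -/
def IsEvenOrTop (d : Fin N → ℤ) : Prop := ∀ i, Even (d i) ∨ d i = 2 * N - 1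

lemma sum_sign_mul_coeff_eq_zero {d : Fin N → ℤ} (hd : IsEvenOrTop d) (hnN : n ≤ N) {k : ℕ}
    (hk : 0 < k) {m : Multiset ℕ} (hm : m.sum + 2 * k = n) :
    ∑ w : Equiv.Perm (Fin N), ((Equiv.Perm.sign w : ℤˣ) : ℤ) *
      (powerAlternant N (2 * k ::ₘ m)).coeff (d - 2 • staircase w) = 0 := by
  have hf := isAlternating_powerAlternant (N := N) m
  have hfs := isSupportedOn_powerAlternant (N := N) m
  simp only [powerAlternant_cons, coeff_powerSum_mul, Finset.mul_sum]
  set f := (powerAlternant N m).coeff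
  have hprod := Fintype.sum_prod_type' (fun (w : Equiv.Perm (Fin N)) (i : Fin N) =>
    ((Equiv.Perm.sign w : ℤˣ) : ℤ) * f (d - 2 • staircase w - Pi.single i ((2 * k : ℕ) : ℤ)))
  rw [← hprod,
    ← Finset.sum_filter_add_sum_filter_not _
      (fun x : Equiv.Perm (Fin N) × Fin N => (x.1 x.2 : ℕ) + k < N)]
  have h2 : ∑ x ∈ Finset.univ.filter
      (fun x : Equiv.Perm (Fin N) × Fin N => ¬ (x.1 x.2 : ℕ) + k < N),
      ((Equiv.Perm.sign x.1 : ℤˣ) : ℤ) *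
        f (d - 2 • staircase x.1 - Pi.single x.2 ((2 * k : ℕ) : ℤ)) = 0 := by
    refine Finset.sum_eq_zero fun x hx => ?_
    obtain ⟨w, i⟩ := x
    have hwi := (Finset.mem_filter.1 hx).2
    dsimp only at hwi ⊢
    set c := d - 2 • staircase w - Pi.single i ((2 * k : ℕ) : ℤ) with hc
    by_contra hne
    have hne : f c ≠ 0 := right_ne_zero_of_mul hne
    obtain ⟨h0, hs⟩ := hfs c hne
    have hinj := hf.injective_of_ne_zero hne
    have hci : c i = d i - 2 * (w i : ℕ) - 2 * k := by
      simp [hc, staircase]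
    have hcj : ∀ j, j ≠ i → c j = d j - 2 * (w j : ℕ) := fun j hj => by
      simp [hc, staircase, hj]
    have hwN := (w i).2
    have h0i := h0 i
    rcases hd i with hdi | hdi
    · have := staircaseSum_add_le_sum_add hinj h0 (v := 2 * N - 1 - 2 * (w i : ℕ)) (by omega) (by
        intro j hj
        rcases eq_or_ne j i with rfl | hji
        · obtain ⟨r, hr⟩ := hdi
          omega
        · rw [hcj j hji] at hj
          rcases hd j with ⟨r, hr⟩ | hdj
          · omega
          · have : w j = w i := Fin.ext (by omega)
            exact hji (w.injective this))
      omega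
    · omega
  rw [h2, add_zero]
  have hlt : ∀ x ∈ Finset.univ.filter
      (fun x : Equiv.Perm (Fin N) × Fin N => (x.1 x.2 : ℕ) + k < N), (x.1 x.2 : ℕ) + k < N :=
    fun x hx => (Finset.mem_filter.1 hx).2
  refine Finset.sum_involution
    (fun x hx => (x.1 * Equiv.swap x.2 (x.1⁻¹ ⟨x.1 x.2 + k, hlt x hx⟩),
      x.1⁻¹ ⟨x.1 x.2 + k, hlt x hx⟩)) ?_ ?_ ?_ ?_
  · rintro ⟨w, i⟩ hx
    have hlt' := hlt _ hx
    dsimp only at hlt' ⊢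
    obtain ⟨j, hj⟩ : ∃ j, j = w⁻¹ ⟨w i + k, hlt'⟩ := ⟨_, rfl⟩
    rw [← hj]
    have hwj : (w j : ℕ) = w i + k := by rw [hj]; simp
    have hij : i ≠ j := by
      rintro rfl
      omega
    have : d - 2 • staircase (w * Equiv.swap i j) - Pi.single j ((2 * k : ℕ) : ℤ) =
        d - 2 • staircase w - Pi.single i ((2 * k : ℕ) : ℤ) := by
      ext l
      simp only [Pi.sub_apply, Pi.smul_apply, staircase, Equiv.Perm.mul_apply]
      rcases eq_or_ne l i with rfl | hli
      · rw [Equiv.swap_apply_left, Pi.single_eq_of_ne hij, Pi.single_eq_same, hwj]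
        push_cast
        ring
      rcases eq_or_ne l j with rfl | hlj
      · rw [Equiv.swap_apply_right, Pi.single_eq_of_ne hli, Pi.single_eq_same, hwj]
        push_cast
        ring
      · rw [Equiv.swap_apply_of_ne_of_ne hli hlj, Pi.single_eq_of_ne hli, Pi.single_eq_of_ne hlj]
    rw [this, Equiv.Perm.sign_mul, Equiv.Perm.sign_swap hij]
    push_cast
    ring
  · rintro ⟨w, i⟩ hx - h
    have h1 := congrArg Prod.snd h
    dsimp only at h1
    have h2 := congrArg w h1
    rw [show ∀ x, w (w⁻¹ x) = x by simp] at h2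
    have := congrArg Fin.val h2
    dsimp only at this
    omega
  · rintro ⟨w, i⟩ hx
    have hlt' := hlt _ hx
    simpa using hlt'
  · rintro ⟨w, i⟩ hx
    have hlt' := hlt _ hx
    dsimp only at hlt' ⊢
    have key : ∀ (h : _), (w * Equiv.swap i (w⁻¹ ⟨w i + k, hlt'⟩))⁻¹
        ⟨(w * Equiv.swap i (w⁻¹ ⟨w i + k, hlt'⟩)) (w⁻¹ ⟨w i + k, hlt'⟩) + k, h⟩ = i := by
      intro h
      rw [Equiv.Perm.inv_eq_iff_eq]
      ext
      simp
    rw [Prod.mk.injEq]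
    refine ⟨?_, key _⟩
    rw [key, Equiv.swap_comm, mul_assoc, Equiv.swap_mul_self, mul_one]

/-- The class function `∑_w sgn(w) χ_{d - 2w}`. -/
noncomputable def psiChar (N n : ℕ) (d : Fin N → ℤ) : Equiv.Perm (Fin n) → ℂ :=
  ∑ w : Equiv.Perm (Fin N), ((((Equiv.Perm.sign w : ℤˣ) : ℤ)) : ℂ) •
    vchar N n (d - 2 • staircase w)

lemma odd_orderOf_iff (π : Equiv.Perm (Fin n)) :
    Odd (orderOf π) ↔ ∀ k ∈ π.partition.parts, Odd k := by
  rw [← Equiv.Perm.lcm_cycleType, Equiv.Perm.parts_partition]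
  have h1 : (∀ k ∈ π.cycleType + Multiset.replicate (Fintype.card (Fin n) - π.support.card) 1,
      Odd k) ↔ ∀ k ∈ π.cycleType, Odd k := by
    constructor
    · exact fun h k hk => h k (Multiset.mem_add.2 (Or.inl hk))
    · intro h k hk
      rcases Multiset.mem_add.1 hk with hk | hk
      · exact h k hk
      · rw [Multiset.eq_of_mem_replicate hk]; exact odd_one
  rw [h1]
  constructor
  · exact fun h k hk => h.of_dvd_nat (Multiset.dvd_lcm hk)
  · intro h
    generalize π.cycleType = s at h
    induction s using Multiset.induction_on with
    | empty => simp
    | cons a s ih =>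
      rw [Multiset.lcm_cons]
      have h1 := h a (Multiset.mem_cons_self a s)
      have h2 := ih fun k hk => h k (Multiset.mem_cons_of_mem hk)
      have h3 : lcm a s.lcm ∣ a * s.lcm := lcm_dvd (dvd_mul_right _ _) (dvd_mul_left _ _)
      exact (h1.mul h2).of_dvd_nat h3

lemma psiChar_eq_zero {d : Fin N → ℤ} (hd : IsEvenOrTop d) (hnN : n ≤ N)
    {π : Equiv.Perm (Fin n)} (hπ : ¬ Odd (orderOf π)) : psiChar N n d π = 0 := by
  rw [odd_orderOf_iff] at hπ
  push Not at hπ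
  obtain ⟨q, hq, hodd⟩ := hπ
  obtain ⟨k, rfl⟩ := (Nat.not_odd_iff_even.1 hodd).exists_two_nsmul
  rw [smul_eq_mul] at hq
  obtain ⟨m, hm⟩ := Multiset.exists_cons_of_mem hq
  have hk : 0 < k := by have := π.partition.parts_pos hq; omega
  have hs := parts_sum π
  rw [hm, Multiset.sum_cons] at hs
  have h := sum_sign_mul_coeff_eq_zero hd hnN hk (m := m) (by omega)
  simp only [psiChar, Finset.sum_apply, Pi.smul_apply, smul_eq_mul, vchar, hm]
  exact_mod_cast h

lemma charInner_twoReg_psiChar {d : Fin N → ℤ} (hd : IsEvenOrTop d) (hnN : n ≤ N)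
    (f : Equiv.Perm (Fin n) → ℂ) :
    charInner (twoReg f) (psiChar N n d) = charInner f (psiChar N n d) := by
  unfold charInner
  congr 1
  refine Finset.sum_congr rfl fun π _ => ?_
  unfold twoReg
  split_ifs with h
  · rfl
  · rw [psiChar_eq_zero hd hnN (by rwa [orderOf_inv]), mul_zero, mul_zero]

/-- The signed number of ways to write `d` as a rearrangement of `A` plus twice a rearrangement of
`0, …, N - 1`. -/
noncomputable def pairing (N : ℕ) (A : Finset ℕ) (d : Fin N → ℤ) : ℤ :=
  ∑ w : Equiv.Perm (Fin N), ((Equiv.Perm.sign w : ℤˣ) : ℤ) *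
    kron (expVec N A) (d - 2 • staircase w)

lemma charInner_bchar_psiChar {A : Finset ℕ} (hA : A ∈ betaSets N n) (d : Fin N → ℤ) :
    charInner (bchar N n A) (psiChar N n d) = pairing N A d := by
  rw [psiChar, charInner_sum_right, pairing, Int.cast_sum]
  refine Finset.sum_congr rfl fun w _ => ?_
  rw [charInner_smul_right, bchar, charInner_vchar,
    if_pos ⟨fun i => Int.natCast_nonneg _, sum_expVec hA⟩, Int.cast_mul]

end Projective

lemma Set.EqOn.of_strictMonoOn_of_image_eq {α β : Type*} [LinearOrder α] [WellFoundedLT α]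
    [LinearOrder β] {s : Set α} {f g : α → β} (hf : StrictMonoOn f s) (hg : StrictMonoOn g s)
    (h : f '' s = g '' s) : Set.EqOn f g s := by
  intro x
  induction x using WellFoundedLT.induction with
  | _ x ih =>
  intro hx
  rcases lt_trichotomy (f x) (g x) with hlt | heq | hlt
  · obtain ⟨y, hy, hyx⟩ : f x ∈ g '' s := h ▸ ⟨x, hx, rfl⟩
    have hyx' : y < x := (hg.lt_iff_lt hy hx).1 (hyx ▸ hlt)
    exact absurd (hf.injOn hy hx ((ih y hyx' hy).trans hyx)) hyx'.ne
  · exact heq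
  · obtain ⟨y, hy, hyx⟩ : g x ∈ f '' s := h ▸ ⟨x, hx, rfl⟩
    have hyx' : y < x := (hf.lt_iff_lt hy hx).1 (hyx ▸ hlt)
    exact absurd (hg.injOn hy hx ((ih y hyx' hy).symm.trans hyx)) hyx'.ne

section Labels

variable {N n : ℕ}

/-- Permutations `w` for which `b + 2w` has all entries even or equal to `2N - 1`. -/
def IsFolding (b : Fin N → ℤ) (w : Equiv.Perm (Fin N)) : Prop :=
  IsEvenOrTop (b + 2 • staircase w)

lemma isFolding_iff {b : Fin N → ℤ} {w : Equiv.Perm (Fin N)} :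
    IsFolding b w ↔ ∀ i, Odd (b i) → b i + 2 * (w i : ℕ) = 2 * N - 1 := by
  refine forall_congr' fun i => ?_
  have : (b + 2 • staircase w) i = b i + 2 * (w i : ℕ) := by simp [staircase]
  rw [this]
  constructor
  · rintro (⟨r, hr⟩ | h) ⟨s, hs⟩
    · omega
    · exact h
  · intro h
    rcases Int.even_or_odd (b i) with ⟨r, hr⟩ | ho
    · exact Or.inl ⟨r + (w i : ℕ), by omega⟩
    · exact Or.inr (h ho)

lemma exists_isFolding {b : Fin N → ℤ} (hb : Function.Injective b) (h0 : ∀ i, 0 ≤ b i)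
    (h1 : ∀ i, b i < 2 * N) : ∃ w, IsFolding b w := by
  obtain ⟨g, hg⟩ := Set.MapsTo.exists_equiv_extend_of_card_eq
    (α := Fin N) (t := (Finset.univ : Finset (Fin N))) (by simp)
    (s := {i | Odd (b i)})
    (f := fun i => ⟨((2 * N - 1 - b i) / 2).toNat, by have := h0 i; have := h1 i; omega⟩)
    (by intro; simp) (by
      rintro i ⟨r, hr⟩ j ⟨s, hs⟩ hij
      have := congrArg Fin.val hij
      have := h1 i
      have := h1 j
      exact hb (by dsimp only at *; omega))
  let w : Equiv.Perm (Fin N) := g.trans (Equiv.subtypeUnivEquiv (by simp))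
  refine ⟨w, isFolding_iff.2 fun i hi => ?_⟩
  have := congrArg Fin.val (hg i hi)
  change ((w i : Fin N) : ℕ) = _ at this
  obtain ⟨r, hr⟩ := hi
  have := h1 i
  dsimp only at *
  omega

lemma IsFolding.eq_of_strictMonoOn {b : Fin N → ℤ} {w w' : Equiv.Perm (Fin N)}
    (hw : IsFolding b w) (hw' : IsFolding b w') (hm : StrictMonoOn w {i | Even (b i)})
    (hm' : StrictMonoOn w' {i | Even (b i)}) : w = w' := by
  have hodd : ∀ i, ¬ Even (b i) → w i = w' i := fun i hi => by
    have h1 := isFolding_iff.1 hw i (Int.not_even_iff_odd.1 hi)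
    have h2 := isFolding_iff.1 hw' i (Int.not_even_iff_odd.1 hi)
    exact Fin.ext (by omega)
  have himg : w '' {i | Even (b i)} = w' '' {i | Even (b i)} := by
    have hc : w '' {i | Even (b i)}ᶜ = w' '' {i | Even (b i)}ᶜ := Set.image_congr hodd
    rwa [Set.image_compl_eq w.bijective, Set.image_compl_eq w'.bijective, compl_inj_iff] at hc
  ext i : 1
  by_cases hi : Even (b i)
  · exact Set.EqOn.of_strictMonoOn_of_image_eq hm hm' himg hi
  · exact hodd i hi

lemma IsFolding.strictMonoOn_of_maximal {b : Fin N → ℤ} (hb : StrictMono b)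
    {w : Equiv.Perm (Fin N)} (hw : IsFolding b w)
    (hmax : ∀ w', IsFolding b w' →
      ∑ i, (b + 2 • staircase w') i ^ 2 ≤ ∑ i, (b + 2 • staircase w) i ^ 2) :
    StrictMonoOn w {i | Even (b i)} := by
  intro i hi j hj hij
  by_contra hle
  have hlt : w j < w i := lt_of_le_of_ne (not_lt.1 hle) fun h => hij.ne' (w.injective h)
  have h1 := hmax (w * Equiv.swap i j) (isFolding_iff.2 fun l hl => by
    have hli : l ≠ i := by
      rintro rfl
      exact Int.not_even_iff_odd.2 hl hi
    have hlj : l ≠ j := by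
      rintro rfl
      exact Int.not_even_iff_odd.2 hl hj
    rw [Equiv.Perm.mul_apply, Equiv.swap_apply_of_ne_of_ne hli hlj]
    exact isFolding_iff.1 hw l hl)
  rw [← sub_nonpos, ← Finset.sum_sub_distrib, Fintype.sum_eq_add i j hij.ne] at h1
  · have e : ∀ (w' : Equiv.Perm (Fin N)) l, (b + 2 • staircase w') l = b l + 2 * (w' l : ℕ) := by
      simp [staircase]
    simp only [e, Equiv.Perm.mul_apply, Equiv.swap_apply_left, Equiv.swap_apply_right] at h1
    have h2 := hb hij
    have h3 : ((w j : ℕ) : ℤ) < (w i : ℕ) := by exact_mod_cast hlt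
    nlinarith [mul_pos (sub_pos.2 h2) (sub_pos.2 h3)]
  · rintro l ⟨hli, hlj⟩
    simp [staircase, Equiv.swap_apply_of_ne_of_ne hli hlj]

lemma strictMono_expVec {A : Finset ℕ} (hA : A.card = N) : StrictMono (expVec N A) :=
  fun _ _ h => by simpa [expVec] using strictMono_enum hA h

/-- The folding `w` of `A` for which the sum of squares of the entries of `A + 2w` is maximal. -/
noncomputable def folding (N : ℕ) (A : Finset ℕ) : Equiv.Perm (Fin N) :=
  if h : ∃ w, IsFolding (expVec N A) w ∧ ∀ w', IsFolding (expVec N A) w' →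
      ∑ i, (expVec N A + 2 • staircase w') i ^ 2 ≤ ∑ i, (expVec N A + 2 • staircase w) i ^ 2
  then h.choose else 1

/-- The exponent vector of a beta-set plus twice its folding. -/
noncomputable def foldVec (N : ℕ) (A : Finset ℕ) : Fin N → ℤ :=
  expVec N A + 2 • staircase (folding N A)

lemma foldVec_apply (A : Finset ℕ) (i : Fin N) :
    foldVec N A i = enum N A i + 2 * (folding N A i : ℕ) := by
  simp [foldVec, staircase, expVec]

variable {A A' : Finset ℕ}

lemma folding_spec (hA : A.card = N) (hlt : ∀ p ∈ A, p < 2 * N) :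
    IsFolding (expVec N A) (folding N A) ∧ ∀ w', IsFolding (expVec N A) w' →
      ∑ i, (expVec N A + 2 • staircase w') i ^ 2 ≤ ∑ i, foldVec N A i ^ 2 := by
  have h : ∃ w, IsFolding (expVec N A) w ∧ ∀ w', IsFolding (expVec N A) w' →
      ∑ i, (expVec N A + 2 • staircase w') i ^ 2 ≤
        ∑ i, (expVec N A + 2 • staircase w) i ^ 2 := by
    obtain ⟨w, hw⟩ := exists_isFolding (expVec_injective hA) (fun i => Int.natCast_nonneg _)
      (fun i => by
        have := hlt _ (enum_mem hA i)
        simp only [expVec]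
        omega)
    obtain ⟨v, hv, hmax⟩ := Finset.exists_max_image
      (Finset.univ.filter (IsFolding (expVec N A)))
      (fun w => ∑ i, (expVec N A + 2 • staircase w) i ^ 2) ⟨w, by simpa using hw⟩
    exact ⟨v, by simpa using hv, fun w' hw' => hmax w' (by simpa using hw')⟩
  rw [foldVec, folding, dif_pos h]
  exact h.choose_spec

lemma isEvenOrTop_foldVec (hA : A.card = N) (hlt : ∀ p ∈ A, p < 2 * N) :
    IsEvenOrTop (foldVec N A) := (folding_spec hA hlt).1

lemma foldVec_of_odd (hA : A.card = N) (hlt : ∀ p ∈ A, p < 2 * N) {i : Fin N}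
    (hi : ¬ Even (enum N A i)) : foldVec N A i = 2 * N - 1 := by
  rw [foldVec_apply]
  have h := isFolding_iff.1 (folding_spec hA hlt).1 i
  simp only [expVec] at h
  exact h (by exact_mod_cast Nat.not_even_iff_odd.1 hi)

lemma even_foldVec_iff (hA : A.card = N) (hlt : ∀ p ∈ A, p < 2 * N) {i : Fin N} :
    Even (foldVec N A i) ↔ Even (enum N A i) := by
  constructor
  · intro h
    by_contra h'
    rw [foldVec_of_odd hA hlt h'] at h
    obtain ⟨r, hr⟩ := h
    omega
  · rintro ⟨r, hr⟩
    rw [foldVec_apply]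
    exact ⟨r + (folding N A i : ℕ), by omega⟩

lemma setOf_even_expVec (A : Finset ℕ) :
    {i | Even (expVec N A i)} = {i | Even (enum N A i)} := by
  ext i
  simp [expVec, Int.even_coe_nat]

lemma strictMonoOn_folding (hA : A.card = N) (hlt : ∀ p ∈ A, p < 2 * N) :
    StrictMonoOn (folding N A) {i | Even (enum N A i)} := by
  rw [← setOf_even_expVec]
  exact (folding_spec hA hlt).1.strictMonoOn_of_maximal (strictMono_expVec hA)
    (folding_spec hA hlt).2

lemma eq_folding (hA : A.card = N) (hlt : ∀ p ∈ A, p < 2 * N) {w : Equiv.Perm (Fin N)}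
    (hw : IsFolding (expVec N A) w)
    (hm : StrictMonoOn w {i | Even (enum N A i)}) : w = folding N A := by
  refine hw.eq_of_strictMonoOn (folding_spec hA hlt).1 ?_ ?_
  · rwa [setOf_even_expVec]
  · rw [setOf_even_expVec]
    exact strictMonoOn_folding hA hlt

lemma exists_comp_of_kron_ne_zero {c d : Fin N → ℤ} (h : kron c d ≠ 0) :
    ∃ σ : Equiv.Perm (Fin N), d = c ∘ σ := by
  obtain ⟨σ, -, hσ⟩ := Finset.exists_ne_zero_of_sum_ne_zero h
  exact ⟨σ, by_contra fun h' => hσ (if_neg h')⟩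

lemma sub_two_smul_staircase_comp {d b : Fin N → ℤ} {w σ : Equiv.Perm (Fin N)}
    (h : d - 2 • staircase w = b ∘ σ) : d ∘ ⇑σ⁻¹ = b + 2 • staircase (w * σ⁻¹) := by
  ext i
  have := congrFun h (σ⁻¹ i)
  simp only [Pi.sub_apply, Pi.smul_apply, staircase, Function.comp, Pi.add_apply,
    Equiv.Perm.mul_apply, show σ (σ⁻¹ i) = i by simp] at this ⊢
  linarith

lemma le_and_eq_of_kron_ne_zero (hA : A.card = N) (hlt : ∀ p ∈ A, p < 2 * N) {d : Fin N → ℤ}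
    (hd : IsEvenOrTop d) {w : Equiv.Perm (Fin N)}
    (h : kron (expVec N A) (d - 2 • staircase w) ≠ 0) :
    ∑ i, d i ^ 2 ≤ ∑ i, foldVec N A i ^ 2 ∧ (∑ i, d i ^ 2 = ∑ i, foldVec N A i ^ 2 →
      ∃ σ : Equiv.Perm (Fin N), w = folding N A * σ ∧ d = foldVec N A ∘ σ) := by
  obtain ⟨σ, hσ⟩ := exists_comp_of_kron_ne_zero h
  have h1 := sub_two_smul_staircase_comp hσ
  have hf : IsFolding (expVec N A) (w * σ⁻¹) := by
    rw [IsFolding, ← h1]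
    exact fun i => hd _
  have hsum : ∑ i, (expVec N A + 2 • staircase (w * σ⁻¹)) i ^ 2 = ∑ i, d i ^ 2 := by
    rw [← h1]
    exact Equiv.sum_comp σ⁻¹ fun i => d i ^ 2
  refine ⟨hsum ▸ (folding_spec hA hlt).2 _ hf, fun heq => ⟨σ, ?_, ?_⟩⟩
  all_goals
    have h2 : w * σ⁻¹ = folding N A := by
      refine eq_folding hA hlt hf ?_
      rw [← setOf_even_expVec]
      refine hf.strictMonoOn_of_maximal (strictMono_expVec hA) fun w' hw' => ?_
      rw [hsum, heq]
      exact (folding_spec hA hlt).2 _ hw'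
  · rw [← h2]; simp
  · rw [foldVec, ← h2, ← h1]
    ext i
    simp

lemma exists_kron_ne_zero_of_pairing_ne_zero {d : Fin N → ℤ} (h : pairing N A d ≠ 0) :
    ∃ w : Equiv.Perm (Fin N), kron (expVec N A) (d - 2 • staircase w) ≠ 0 := by
  obtain ⟨w, -, hw⟩ := Finset.exists_ne_zero_of_sum_ne_zero h
  exact ⟨w, right_ne_zero_of_mul hw⟩

/-- The permutations fixing a vector. -/
def vecStab (d : Fin N → ℤ) : Subgroup (Equiv.Perm (Fin N)) where
  carrier := {σ | d ∘ σ = d}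
  mul_mem' {σ τ} hσ hτ := by
    rw [Set.mem_ofPred_eq] at *
    rw [Equiv.Perm.coe_mul, ← Function.comp_assoc, hσ, hτ]
  one_mem' := rfl
  inv_mem' {σ} hσ := by
    rw [Set.mem_ofPred_eq] at *
    conv_lhs => rw [← hσ]
    ext i
    simp

lemma mem_vecStab {d : Fin N → ℤ} {σ : Equiv.Perm (Fin N)} : σ ∈ vecStab d ↔ d ∘ σ = d := Iff.rfl

lemma isAlternating_kron_right (c : Fin N → ℤ) : IsAlternating (fun d => kron c d) := by
  intro τ d
  simp only [kron, Finset.mul_sum]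
  rw [← Equiv.sum_comp (Equiv.mulRight τ)]
  refine Finset.sum_congr rfl fun σ _ => ?_
  have : d ∘ τ = c ∘ (σ * τ : Equiv.Perm (Fin N)) ↔ d = c ∘ σ := by
    rw [Equiv.Perm.coe_mul, ← Function.comp_assoc]
    exact τ.surjective.injective_comp_right.eq_iff
  simp only [Equiv.coe_mulRight, this]
  split_ifs <;> simp [mul_comm]

lemma sign_mul_kron_mul {d : Fin N → ℤ} (c : Fin N → ℤ) (w : Equiv.Perm (Fin N))
    {σ : Equiv.Perm (Fin N)} (hσ : σ ∈ vecStab d) :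
    ((Equiv.Perm.sign (w * σ) : ℤˣ) : ℤ) * kron c (d - 2 • staircase (w * σ)) =
      ((Equiv.Perm.sign w : ℤˣ) : ℤ) * kron c (d - 2 • staircase w) := by
  have h1 : d - 2 • staircase (w * σ) = (d - 2 • staircase w) ∘ σ := by
    ext i
    have := congrFun (mem_vecStab.1 hσ) i
    simp only [Function.comp] at this
    simp [staircase, this]
  have h2 := isAlternating_kron_right c σ (d - 2 • staircase w)
  simp only at h2
  rw [h1, h2, Equiv.Perm.sign_mul]
  rcases Int.units_eq_one_or (Equiv.Perm.sign σ) with h | h <;> simp [h]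

lemma Subgroup.card_dvd_sum_of_mul_right {G : Type*} [Group G] [Fintype G] (H : Subgroup G)
    (t : G → ℤ) (ht : ∀ g, ∀ h ∈ H, t (g * h) = t g) : (Nat.card H : ℤ) ∣ ∑ g, t g := by
  obtain ⟨S, hS, -⟩ := H.exists_isComplement_left 1
  rw [← Equiv.sum_comp (Equiv.ofBijective _ hS), Fintype.sum_prod_type]
  refine Finset.dvd_sum fun s _ => ?_
  have : ∀ h : (H : Set G), t (Equiv.ofBijective _ hS (s, h)) = t s := fun h => ht s h h.2
  simp_rw [this]
  rw [Finset.sum_const, nsmul_eq_mul, Finset.card_univ, ← Nat.card_eq_fintype_card]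
  exact dvd_mul_right _ _

lemma card_vecStab_dvd_pairing (A : Finset ℕ) (d : Fin N → ℤ) :
    (Nat.card (vecStab d) : ℤ) ∣ pairing N A d :=
  Subgroup.card_dvd_sum_of_mul_right _ _ fun w _ hσ => sign_mul_kron_mul _ w hσ

lemma pairing_foldVec (hA : A.card = N) (hlt : ∀ p ∈ A, p < 2 * N) :
    pairing N A (foldVec N A) =
      ((Equiv.Perm.sign (folding N A) : ℤˣ) : ℤ) * Nat.card (vecStab (foldVec N A)) := by
  rw [pairing, ← Equiv.sum_comp (Equiv.mulLeft (folding N A))]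
  have : ∀ σ : Equiv.Perm (Fin N),
      ((Equiv.Perm.sign (Equiv.mulLeft (folding N A) σ) : ℤˣ) : ℤ) *
        kron (expVec N A) (foldVec N A - 2 • staircase (Equiv.mulLeft (folding N A) σ)) =
      if σ ∈ vecStab (foldVec N A) then ((Equiv.Perm.sign (folding N A) : ℤˣ) : ℤ) else 0 := by
    intro σ
    rw [Equiv.coe_mulLeft]
    split_ifs with hσ
    · rw [sign_mul_kron_mul _ _ hσ, foldVec, add_sub_cancel_right, kron_expVec hA hA, if_pos rfl,
        mul_one]
    · by_contra hne
      obtain ⟨τ, hτ, hτ'⟩ := (le_and_eq_of_kron_ne_zero hA hlt (isEvenOrTop_foldVec hA hlt)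
        (right_ne_zero_of_mul hne)).2 rfl
      rw [mul_left_cancel hτ] at hσ
      exact hσ hτ'.symm
  rw [Finset.sum_congr rfl fun σ _ => this σ, ← Finset.sum_filter, Finset.sum_const, nsmul_eq_mul,
    mul_comm]
  congr 2
  rw [Nat.card_eq_fintype_card, Fintype.card_subtype]

end Labels

section FoldLabel

variable {N n : ℕ} {A A' : Finset ℕ}

/-- The value of `foldVec` at the position of an element of `A`. -/
noncomputable def foldFun (N : ℕ) (A : Finset ℕ) : ℕ → ℤ :=
  Function.extend (enum N A) (foldVec N A) 0

lemma foldFun_enum (hA : A.card = N) (i : Fin N) : foldFun N A (enum N A i) = foldVec N A i :=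
  (strictMono_enum hA).injective.extend_apply _ _ _

lemma exists_enum_eq (hA : A.card = N) {x : ℕ} (hx : x ∈ A) : ∃ i, enum N A i = x := by
  rw [← image_enum hA] at hx
  simpa using hx

lemma strictMonoOn_foldFun (hA : A.card = N) (hlt : ∀ p ∈ A, p < 2 * N) :
    StrictMonoOn (foldFun N A) (A.filter Even) := by
  intro x hx y hy hxy
  rw [Finset.mem_coe, Finset.mem_filter] at hx hy
  obtain ⟨i, rfl⟩ := exists_enum_eq hA hx.1
  obtain ⟨j, rfl⟩ := exists_enum_eq hA hy.1
  have hij : i < j := (strictMono_enum hA).lt_iff_lt.1 hxy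
  have := strictMonoOn_folding hA hlt hx.2 hy.2 hij
  have : (folding N A i : ℕ) < folding N A j := this
  rw [foldFun_enum hA, foldFun_enum hA, foldVec_apply, foldVec_apply]
  omega

/-- The set of even entries of `foldVec`. -/
noncomputable def foldLabel (N : ℕ) (A : Finset ℕ) : Finset ℤ :=
  (Finset.univ.image (foldVec N A)).filter Even

lemma foldLabel_eq_of_comp {σ : Equiv.Perm (Fin N)} (h : foldVec N A' = foldVec N A ∘ σ) :
    foldLabel N A' = foldLabel N A := by
  rw [foldLabel, h, ← Finset.image_image, Finset.image_univ_equiv, foldLabel]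

lemma foldLabel_eq_image (hA : A.card = N) (hlt : ∀ p ∈ A, p < 2 * N) :
    foldLabel N A = (A.filter Even).image (foldFun N A) := by
  ext v
  simp only [foldLabel, Finset.mem_filter, Finset.mem_image, Finset.mem_univ, true_and]
  constructor
  · rintro ⟨⟨i, rfl⟩, hv⟩
    exact ⟨enum N A i, ⟨enum_mem hA i, (even_foldVec_iff hA hlt).1 hv⟩, foldFun_enum hA i⟩
  · rintro ⟨x, ⟨hx, he⟩, rfl⟩
    obtain ⟨i, rfl⟩ := exists_enum_eq hA hx
    rw [foldFun_enum hA]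
    exact ⟨⟨i, rfl⟩, (even_foldVec_iff hA hlt).2 he⟩

lemma card_foldLabel (hA : A.card = N) (hlt : ∀ p ∈ A, p < 2 * N) :
    (foldLabel N A).card = (A.filter Even).card := by
  rw [foldLabel_eq_image hA hlt, Finset.card_image_of_injOn (strictMonoOn_foldFun hA hlt).injOn]

lemma subset_of_foldLabel_eq (hA : A.card = N) (hlt : ∀ p ∈ A, p < 2 * N) (hA' : A'.card = N)
    (hlt' : ∀ p ∈ A', p < 2 * N) (hL : foldLabel N A = foldLabel N A')
    (hE : A.filter Even = A'.filter Even) : A ⊆ A' := by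
  have heq : Set.EqOn (foldFun N A) (foldFun N A') (A.filter Even) := by
    refine Set.EqOn.of_strictMonoOn_of_image_eq (strictMonoOn_foldFun hA hlt)
      (hE ▸ strictMonoOn_foldFun hA' hlt') ?_
    rw [foldLabel_eq_image hA hlt, foldLabel_eq_image hA' hlt', ← hE] at hL
    exact_mod_cast hL
  intro x hx
  by_cases he : Even x
  · exact (Finset.mem_filter.1 (hE ▸ Finset.mem_filter.2 ⟨hx, he⟩)).1
  obtain ⟨i, rfl⟩ := exists_enum_eq hA hx
  obtain ⟨j, hj⟩ := (folding N A').surjective (folding N A i)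
  have h1 := foldVec_of_odd hA hlt he
  rw [foldVec_apply] at h1
  by_cases hj' : Even (enum N A' j)
  · have hm : enum N A' j ∈ A.filter Even := hE ▸ Finset.mem_filter.2 ⟨enum_mem hA' j, hj'⟩
    have h2 := heq hm
    obtain ⟨k, hk⟩ := exists_enum_eq hA (Finset.mem_filter.1 hm).1
    rw [foldFun_enum hA', ← hk, foldFun_enum hA, foldVec_apply, foldVec_apply, hj, hk] at h2
    have h3 : k = i := (folding N A).injective (Fin.ext (by omega))
    subst h3
    exact absurd (hk ▸ hj') he
  · have h2 := foldVec_of_odd hA' hlt' hj'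
    rw [foldVec_apply, hj] at h2
    have : enum N A i = enum N A' j := by omega
    rw [this]
    exact enum_mem hA' j

lemma eq_of_foldLabel_eq (hA : A.card = N) (hlt : ∀ p ∈ A, p < 2 * N) (hA' : A'.card = N)
    (hlt' : ∀ p ∈ A', p < 2 * N) (hL : foldLabel N A = foldLabel N A')
    (hE : A.filter Even = A'.filter Even) : A = A' :=
  (subset_of_foldLabel_eq hA hlt hA' hlt' hL hE).antisymm
    (subset_of_foldLabel_eq hA' hlt' hA hlt hL.symm hE.symm)

/-- The beta-sets containing exactly one of `p` and `2N - 1 - p` for all `p < 2N`. -/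
def IsFoldSymm (N : ℕ) (A : Finset ℕ) : Prop := ∀ p < 2 * N, p ∈ A ↔ 2 * N - 1 - p ∉ A

lemma IsFoldSymm.foldVec_of_even (hs : IsFoldSymm N A) (hA : A.card = N)
    (hlt : ∀ p ∈ A, p < 2 * N) {i : Fin N} (hi : Even (enum N A i)) :
    foldVec N A i = 2 * enum N A i := by
  have hl : ∀ i, enum N A i < 2 * N := fun i => hlt _ (enum_mem hA i)
  let f : Fin N → Fin N := fun i =>
    if Even (enum N A i) then ⟨enum N A i / 2, by have := hl i; omega⟩
    else ⟨(2 * N - 1 - enum N A i) / 2, by have := hl i; omega⟩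
  have hne : ∀ i j, enum N A i ≠ 2 * N - 1 - enum N A j := fun i j h =>
    (hs _ (hl j)).1 (enum_mem hA j) (h ▸ enum_mem hA i)
  have hf : Function.Injective f := by
    intro i j hij
    apply (strictMono_enum hA).injective
    have := hl i
    have := hl j
    have h1 := hne i j
    have h2 := hne j i
    simp only [f] at hij
    split_ifs at hij with hi hj hj <;> simp only [Fin.mk.injEq] at hij <;>
      simp only [Nat.even_iff] at hi hj <;> omega
  let w : Equiv.Perm (Fin N) := Equiv.ofBijective f (Finite.injective_iff_bijective.1 hf)
  have hw : w = folding N A := by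
    refine eq_folding hA hlt (isFolding_iff.2 fun i hi => ?_) ?_
    · have hi' : ¬ Even (enum N A i) := by
        rw [Nat.not_even_iff_odd]
        simpa [expVec] using hi
      have h1 : (w i : ℕ) = (2 * N - 1 - enum N A i) / 2 := by
        change (f i : ℕ) = _
        simp only [f, if_neg hi']
      have := hl i
      rw [Nat.even_iff] at hi'
      rw [h1, expVec]
      omega
    · intro i hi j hj hij
      have h1 : ∀ i, Even (enum N A i) → (w i : ℕ) = enum N A i / 2 := fun i hi => by
        change (f i : ℕ) = _
        simp only [f, if_pos hi]
      have h2 := strictMono_enum hA hij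
      rw [Fin.lt_def, h1 i hi, h1 j hj]
      obtain ⟨r, hr⟩ := hi
      obtain ⟨s, hs⟩ := hj
      omega
  rw [foldVec_apply, ← hw]
  have h1 : (w i : ℕ) = enum N A i / 2 := by
    change (f i : ℕ) = _
    simp only [f, if_pos hi]
  obtain ⟨r, hr⟩ := hi
  omega

lemma IsFoldSymm.foldLabel_eq (hs : IsFoldSymm N A) (hA : A.card = N)
    (hlt : ∀ p ∈ A, p < 2 * N) :
    foldLabel N A = (A.filter Even).image (fun x : ℕ => 2 * (x : ℤ)) := by
  rw [foldLabel_eq_image hA hlt]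
  refine Finset.image_congr fun x hx => ?_
  obtain ⟨hx, he⟩ := Finset.mem_filter.1 hx
  obtain ⟨i, rfl⟩ := exists_enum_eq hA hx
  rw [foldFun_enum hA, hs.foldVec_of_even hA hlt he]

lemma IsFoldSymm.eq_of_foldLabel_eq (hs : IsFoldSymm N A) (hs' : IsFoldSymm N A')
    (hA : A.card = N) (hlt : ∀ p ∈ A, p < 2 * N) (hA' : A'.card = N)
    (hlt' : ∀ p ∈ A', p < 2 * N) (hL : foldLabel N A = foldLabel N A') : A = A' := by
  refine _root_.eq_of_foldLabel_eq hA hlt hA' hlt' hL ?_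
  rw [hs.foldLabel_eq hA hlt, hs'.foldLabel_eq hA' hlt'] at hL
  exact Finset.image_injective (fun x y h => by simpa using h) hL

/-- The even elements of `A` are `0, 2, …, 2(a - 1)` for some `a`. -/
def IsLowEven (A : Finset ℕ) : Prop := A.filter Even = (Finset.range (A.filter Even).card).image (2 * ·)

lemma IsLowEven.eq_of_foldLabel_eq (hs : IsLowEven A) (hs' : IsLowEven A')
    (hA : A.card = N) (hlt : ∀ p ∈ A, p < 2 * N) (hA' : A'.card = N)
    (hlt' : ∀ p ∈ A', p < 2 * N) (hL : foldLabel N A = foldLabel N A') : A = A' := by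
  refine _root_.eq_of_foldLabel_eq hA hlt hA' hlt' hL ?_
  have := congrArg Finset.card hL
  rw [card_foldLabel hA hlt, card_foldLabel hA' hlt'] at this
  rw [hs, hs', this]

/-- A beta-set with the given label, with the symmetry `p ↦ 2N - 1 - p` if possible. -/
noncomputable def labelRep (N n : ℕ) (L : Finset ℤ) : Finset ℕ :=
  if h : ∃ A ∈ betaSets N n, foldLabel N A = L ∧ IsFoldSymm N A then h.choose
  else if h : ∃ A ∈ betaSets N n, foldLabel N A = L then h.choose else ∅

lemma labelRep_spec (hA : A ∈ betaSets N n) :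
    labelRep N n (foldLabel N A) ∈ betaSets N n ∧
      foldLabel N (labelRep N n (foldLabel N A)) = foldLabel N A := by
  rw [labelRep]
  split_ifs with h h'
  · exact ⟨h.choose_spec.1, h.choose_spec.2.1⟩
  · exact h'.choose_spec
  · exact absurd ⟨A, hA, rfl⟩ h'

/-- A set of beta-sets having each label exactly once. -/
noncomputable def basicSets (N n : ℕ) : Finset (Finset ℕ) :=
  (betaSets N n).filter fun A => labelRep N n (foldLabel N A) = A

lemma mem_betaSets_of_mem_basicSets (h : A ∈ basicSets N n) : A ∈ betaSets N n :=
  (Finset.mem_filter.1 h).1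

lemma eq_of_mem_basicSets (hA : A ∈ basicSets N n) (hA' : A' ∈ basicSets N n)
    (h : foldLabel N A = foldLabel N A') : A = A' := by
  rw [← (Finset.mem_filter.1 hA).2, h, (Finset.mem_filter.1 hA').2]

lemma IsFoldSymm.mem_basicSets (hnN : n ≤ N) (hs : IsFoldSymm N A) (hA : A ∈ betaSets N n) :
    A ∈ basicSets N n := by
  refine Finset.mem_filter.2 ⟨hA, ?_⟩
  have h : ∃ A' ∈ betaSets N n, foldLabel N A' = foldLabel N A ∧ IsFoldSymm N A' :=
    ⟨A, hA, rfl, hs⟩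
  rw [labelRep, dif_pos h]
  obtain ⟨h1, h2, h3⟩ := h.choose_spec
  exact h3.eq_of_foldLabel_eq hs (mem_betaSets.1 h1).1
    (fun p => lt_two_mul_of_mem_betaSets hnN h1) (mem_betaSets.1 hA).1
    (fun p => lt_two_mul_of_mem_betaSets hnN hA) h2

lemma card_filter_isLowEven_le (hnN : n ≤ N) :
    ((betaSets N n).filter IsLowEven).card ≤ (basicSets N n).card := by
  refine Finset.card_le_card_of_injOn (fun A => labelRep N n (foldLabel N A)) ?_ ?_
  · intro A hA
    obtain ⟨h1, h2⟩ := labelRep_spec (Finset.mem_filter.1 hA).1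
    exact Finset.mem_filter.2 ⟨h1, by rw [h2]⟩
  · intro A hA A' hA' h
    obtain ⟨hA, hl⟩ := Finset.mem_filter.1 hA
    obtain ⟨hA', hl'⟩ := Finset.mem_filter.1 hA'
    dsimp only at h
    refine hl.eq_of_foldLabel_eq hl' (mem_betaSets.1 hA).1
      (fun p => lt_two_mul_of_mem_betaSets hnN hA) (mem_betaSets.1 hA').1
      (fun p => lt_two_mul_of_mem_betaSets hnN hA') ?_
    rw [← (labelRep_spec hA).2, h, (labelRep_spec hA').2]

end FoldLabel

lemma mem_of_forall_triangular_sum_mem {ι : Type*} [Fintype ι] [DecidableEq ι] (c : ι → ι → ℤ)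
    (m : ι → ℤ) (hc : ∀ s, c s s * c s s = 1) (hoff : ∀ t s, t ≠ s → c t s ≠ 0 → m s < m t)
    (X : AddSubgroup ℂ) (a : ι → ℂ) (h : ∀ s, ∑ t, a t * c t s ∈ X) (t : ι) : a t ∈ X := by
  by_contra ht
  obtain ⟨s, hs, hmax⟩ := Finset.exists_max_image (Finset.univ.filter fun t => a t ∉ X) m
    ⟨t, by simpa using ht⟩
  have hs : a s ∉ X := by simpa using hs
  have hmul : ∀ {x : ℂ} (z : ℤ), x ∈ X → x * z ∈ X := fun z hx => by
    rw [mul_comm, ← zsmul_eq_mul]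
    exact X.zsmul_mem hx z
  have h1 := h s
  rw [← Finset.add_sum_erase _ _ (Finset.mem_univ s)] at h1
  have h2 : ∑ t ∈ Finset.univ.erase s, a t * c t s ∈ X := by
    refine X.sum_mem fun t ht => ?_
    by_cases h0 : c t s = 0
    · rw [h0, Int.cast_zero, mul_zero]
      exact X.zero_mem
    · refine hmul _ (by_contra fun h' => ?_)
      have h3 := hoff t s (Finset.ne_of_mem_erase ht) h0
      have h4 := hmax t (by simpa using h')
      omega
  have h3 := hmul (c s s) ((X.add_mem_cancel_right h2).1 h1)
  rw [mul_assoc] at h3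
  norm_cast at h3
  rw [hc, Int.cast_one, mul_one] at h3
  exact hs h3

section BasicSet

variable {N n : ℕ} {A A' : Finset ℕ}

/-- The integer by which `bsign • twoReg (irrChar A)` pairs with the normalised `psiChar`. -/
noncomputable def foldCoeff (N n : ℕ) (A A' : Finset ℕ) : ℤ :=
  bsign N n A * (pairing N A (foldVec N A') / Nat.card (vecStab (foldVec N A')))

/-- The functional given by the normalised inner product with `psiChar (foldVec A')`. -/
noncomputable def foldFunctional (N n : ℕ) (A' : Finset ℕ) :
    (Equiv.Perm (Fin n) → ℂ) →ₗ[ℂ] ℂ :=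
  (Nat.card (vecStab (foldVec N A')) : ℂ)⁻¹ • charInnerLeft (psiChar N n (foldVec N A'))

lemma foldFunctional_twoReg_irrChar (hnN : n ≤ N) (hA : A ∈ betaSets N n)
    (hA' : A' ∈ betaSets N n) :
    foldFunctional N n A' (twoReg (irrChar N n A)) = foldCoeff N n A A' := by
  have hA1 := (mem_betaSets.1 hA').1
  have hlt := fun p => lt_two_mul_of_mem_betaSets hnN hA' (p := p)
  have hne : (Nat.card (vecStab (foldVec N A')) : ℂ) ≠ 0 := by
    exact_mod_cast Nat.card_pos.ne'
  rw [foldFunctional, LinearMap.smul_apply, smul_eq_mul]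
  change _ * charInner _ _ = _
  rw [charInner_twoReg_psiChar (isEvenOrTop_foldVec hA1 hlt) hnN, irrChar, charInner_smul_left,
    charInner_bchar_psiChar hA, foldCoeff, Int.cast_mul]
  obtain ⟨z, hz⟩ := card_vecStab_dvd_pairing A (foldVec N A')
  rw [hz, Int.mul_ediv_cancel_left _ (by exact_mod_cast Nat.card_pos.ne')]
  push_cast
  field_simp

lemma foldCoeff_self (hnN : n ≤ N) (hA : A ∈ betaSets N n) :
    foldCoeff N n A A * foldCoeff N n A A = 1 := by
  rw [foldCoeff, pairing_foldVec (mem_betaSets.1 hA).1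
    (fun p => lt_two_mul_of_mem_betaSets hnN hA),
    Int.mul_ediv_cancel _ (by exact_mod_cast Nat.card_pos.ne'), mul_mul_mul_comm, bsign_mul_self,
    one_mul, Int.units_coe_mul_self]

lemma lt_of_foldCoeff_ne_zero (hnN : n ≤ N) (hA : A ∈ betaSets N n) (hA' : A' ∈ betaSets N n)
    (h : foldCoeff N n A A' ≠ 0) (hL : foldLabel N A ≠ foldLabel N A') :
    ∑ i, foldVec N A' i ^ 2 < ∑ i, foldVec N A i ^ 2 := by
  have hlt := fun p => lt_two_mul_of_mem_betaSets hnN hA (p := p)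
  have hlt' := fun p => lt_two_mul_of_mem_betaSets hnN hA' (p := p)
  have h0 : pairing N A (foldVec N A') ≠ 0 := fun h0 => h (by rw [foldCoeff, h0]; simp)
  obtain ⟨w, hw⟩ := exists_kron_ne_zero_of_pairing_ne_zero h0
  obtain ⟨h1, h2⟩ := le_and_eq_of_kron_ne_zero (mem_betaSets.1 hA).1 hlt
    (isEvenOrTop_foldVec (mem_betaSets.1 hA').1 hlt') hw
  refine lt_of_le_of_ne h1 fun h' => ?_
  obtain ⟨σ, -, hσ⟩ := h2 h'
  exact hL (foldLabel_eq_of_comp hσ).symm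

/-- The restrictions to odd-order elements of the characters of the sets in `basicSets`. -/
noncomputable def basicFun (N n : ℕ) (A : basicSets N n) : Equiv.Perm (Fin n) → ℂ :=
  twoReg (irrChar N n A)

lemma mem_of_forall_foldFunctional_mem (hnN : n ≤ N) (X : AddSubgroup ℂ)
    (a : basicSets N n → ℂ)
    (h : ∀ A' ∈ betaSets N n, foldFunctional N n A' (∑ A, a A • basicFun N n A) ∈ X)
    (A : basicSets N n) : a A ∈ X := by
  have hb : ∀ A : basicSets N n, (A : Finset ℕ) ∈ betaSets N n := fun A =>
    mem_betaSets_of_mem_basicSets A.2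
  refine mem_of_forall_triangular_sum_mem (fun A A' : basicSets N n => foldCoeff N n A A')
    (fun A => ∑ i, foldVec N A i ^ 2) (fun A => foldCoeff_self hnN (hb A))
    (fun A A' hne h => lt_of_foldCoeff_ne_zero hnN (hb A) (hb A') h fun hL =>
      hne (Subtype.ext (eq_of_mem_basicSets A.2 A'.2 hL))) X a (fun A' => ?_) A
  have := h A' (hb A')
  simp only [map_sum, map_smul, smul_eq_mul, basicFun,
    fun A : basicSets N n => foldFunctional_twoReg_irrChar hnN (hb A) (hb A')] at this
  exact this

lemma linearIndependent_basicFun (hnN : n ≤ N) : LinearIndependent ℂ (basicFun N n) := by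
  rw [Fintype.linearIndependent_iff]
  intro a ha A
  exact AddSubgroup.mem_bot.1 (mem_of_forall_foldFunctional_mem hnN ⊥ a
    (fun A' _ => by rw [ha, map_zero]; exact zero_mem _) A)

/-- The functions of the cycle type that vanish on the elements of even order. -/
noncomputable def oddClassFun (n : ℕ) : Submodule ℂ (Equiv.Perm (Fin n) → ℂ) :=
  Submodule.span ℂ ((Nat.Partition.odds n).image
    fun p π => if cycleParts π = p then (1 : ℂ) else 0 : Finset (Equiv.Perm (Fin n) → ℂ))

lemma finrank_oddClassFun_le (n : ℕ) :
    Module.finrank ℂ (oddClassFun n) ≤ (Nat.Partition.odds n).card :=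
  (finrank_span_finset_le_card _).trans Finset.card_image_le

lemma IsIrrChar.twoReg_mem_oddClassFun {f : Equiv.Perm (Fin n) → ℂ} (hf : IsIrrChar _ f) :
    twoReg f ∈ oddClassFun n := by
  obtain ⟨g, hg⟩ := LinearMap.mem_range.1 (mem_classFun hf.eq_of_partition_eq)
  have : twoReg f = ∑ p ∈ Nat.Partition.odds n,
      g p • fun π => if cycleParts π = p then (1 : ℂ) else 0 := by
    ext π
    have h1 : f π = g (cycleParts π) := by rw [← hg]; rfl
    have h2 : Odd (orderOf π) ↔ cycleParts π ∈ Nat.Partition.odds n := by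
      rw [odd_orderOf_iff, Nat.Partition.odds, Nat.Partition.restricted, Finset.mem_filter]
      simp [cycleParts, Nat.not_even_iff_odd]
    simp only [twoReg, h1, h2, Finset.sum_apply, Pi.smul_apply, smul_eq_mul, mul_ite, mul_one,
      mul_zero, Finset.sum_ite_eq]
  rw [this]
  exact Submodule.sum_mem _ fun p hp => Submodule.smul_mem _ _
    (Submodule.subset_span (Finset.mem_coe.2 (Finset.mem_image_of_mem _ hp)))

lemma span_basicFun_le : Submodule.span ℂ (Set.range (basicFun N n)) ≤ oddClassFun n := by
  rw [Submodule.span_le]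
  rintro _ ⟨A, rfl⟩
  exact (isIrrChar_irrChar (mem_betaSets_of_mem_basicSets A.2)).twoReg_mem_oddClassFun

lemma card_basicSets_le (hnN : n ≤ N) : (basicSets N n).card ≤ (Nat.Partition.odds n).card := by
  have h := finrank_span_eq_card (linearIndependent_basicFun hnN)
  rw [Fintype.card_coe] at h
  rw [← h]
  exact (Submodule.finrank_mono span_basicFun_le).trans (finrank_oddClassFun_le n)

lemma span_basicFun_eq (hnN : n ≤ N) (h : (Nat.Partition.odds n).card ≤ (basicSets N n).card) :
    Submodule.span ℂ (Set.range (basicFun N n)) = oddClassFun n := by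
  refine Submodule.eq_of_le_of_finrank_le span_basicFun_le ?_
  rw [finrank_span_eq_card (linearIndependent_basicFun hnN), Fintype.card_coe]
  exact (finrank_oddClassFun_le n).trans h

lemma twoReg_mem_span_int (hnN : n ≤ N)
    (h : (Nat.Partition.odds n).card ≤ (basicSets N n).card) {f : Equiv.Perm (Fin n) → ℂ}
    (hf : IsIrrChar _ f) : twoReg f ∈ Submodule.span ℤ (Set.range (basicFun N n)) := by
  have h1 := hf.twoReg_mem_oddClassFun
  rw [← span_basicFun_eq hnN h, Submodule.mem_span_range_iff_exists_fun] at h1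
  obtain ⟨a, ha⟩ := h1
  obtain ⟨A, hA, rfl⟩ := exists_irrChar_eq hnN hf
  have h2 := mem_of_forall_foldFunctional_mem hnN (Int.castAddHom ℂ).range a fun A' hA' => by
    rw [ha, foldFunctional_twoReg_irrChar hnN hA hA']
    exact ⟨_, rfl⟩
  choose z hz using h2
  rw [← ha]
  refine Submodule.sum_mem _ fun A _ => ?_
  rw [← hz A]
  have : (Int.castAddHom ℂ) (z A) • basicFun N n A = z A • basicFun N n A := by
    ext π
    simp
  rw [this]
  exact Submodule.smul_mem _ _ (Submodule.subset_span ⟨A, rfl⟩)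

theorem exists_twoBasicSet_of_card_le (hnN : n ≤ N)
    (h : (Nat.Partition.odds n).card ≤ (basicSets N n).card) :
    ∃ B : Set (Equiv.Perm (Fin n) → ℂ),
      IsTwoBasicSet (Equiv.Perm (Fin n)) B ∧
      ∀ f : Equiv.Perm (Fin n) → ℂ, IsIrrChar (Equiv.Perm (Fin n)) f →
        (fun g => ((Equiv.Perm.sign g : ℤ) : ℂ) * f g) = f → f ∈ B := by
  have himg : twoReg '' (irrChar N n '' (basicSets N n : Set (Finset ℕ))) =
      Set.range (basicFun N n) := by
    ext v
    simp [basicFun]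
  refine ⟨irrChar N n '' (basicSets N n : Set (Finset ℕ)), ⟨?_, ?_, ?_⟩, ?_⟩
  · rintro _ ⟨A, hA, rfl⟩
    exact isIrrChar_irrChar (mem_betaSets_of_mem_basicSets hA)
  · have hl : LinearIndependent ℤ (basicFun N n) := (linearIndependent_basicFun hnN).restrict_scalars
      (by intro a b hab; simpa using hab)
    choose A hA hAf using fun f : irrChar N n '' (basicSets N n : Set (Finset ℕ)) => f.2
    have hl' := hl.comp (fun f => (⟨A f, hA f⟩ : basicSets N n)) (by
      intro f g hfg
      apply Subtype.ext
      rw [← hAf f, ← hAf g, show A f = A g from congrArg Subtype.val hfg])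
    convert hl' using 2 with f
    rw [Function.comp, basicFun, hAf]
  · rw [himg]
    refine le_antisymm (Submodule.span_le.2 ?_) (Submodule.span_le.2 ?_)
    · rintro _ ⟨A, rfl⟩
      exact Submodule.subset_span
        ⟨_, isIrrChar_irrChar (mem_betaSets_of_mem_basicSets A.2), rfl⟩
    · rintro _ ⟨f, hf, rfl⟩
      exact twoReg_mem_span_int hnN h hf
  · intro f hf hs
    obtain ⟨A, hA, rfl⟩ := exists_irrChar_eq hnN hf
    exact ⟨A, IsFoldSymm.mem_basicSets hnN
      (fun p hp => mem_iff_notMem_of_sign_mul_eq hnN hA hs hp) hA, rfl⟩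

end BasicSet

section Counting

lemma card_odds_mul_le (n k : ℕ) (hk : 2 * k ≤ n) :
    (Nat.Partition.odds (n - 2 * k)).card * Fintype.card k.Partition ≤
      (Finset.univ.filter fun p : n.Partition => (p.parts.filter Even).sum / 2 = k).card := by
  rw [← Finset.card_univ, ← Finset.card_product]
  have hodd : ∀ {μ : (n - 2 * k).Partition}, μ ∈ Nat.Partition.odds (n - 2 * k) →
      ∀ i ∈ μ.parts, ¬ Even i := fun hμ => by
    simpa [Nat.Partition.odds, Nat.Partition.restricted] using hμ
  have heven : ∀ κ : k.Partition, ∀ i ∈ κ.parts.map (2 * ·), Even i := fun κ i hi => by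
    obtain ⟨j, -, rfl⟩ := Multiset.mem_map.1 hi
    exact even_two_mul j
  have hfe : ∀ x ∈ Nat.Partition.odds (n - 2 * k) ×ˢ (Finset.univ : Finset k.Partition),
      (x.1.parts + x.2.parts.map (2 * ·)).filter Even = x.2.parts.map (2 * ·) := fun x hx => by
    rw [Multiset.filter_add, Multiset.filter_eq_nil.2 (hodd (Finset.mem_product.1 hx).1),
      Multiset.filter_eq_self.2 (heven x.2), zero_add]
  have hfo : ∀ x ∈ Nat.Partition.odds (n - 2 * k) ×ˢ (Finset.univ : Finset k.Partition),
      (x.1.parts + x.2.parts.map (2 * ·)).filter (¬ Even ·) = x.1.parts := fun x hx => by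
    rw [Multiset.filter_add, Multiset.filter_eq_self.2 (hodd (Finset.mem_product.1 hx).1),
      Multiset.filter_eq_nil.2 fun i hi h => h (heven x.2 i hi), add_zero]
  refine Finset.card_le_card_of_injOn (fun x =>
    { parts := x.1.parts + x.2.parts.map (2 * ·)
      parts_pos := fun {i} hi => by
        rcases Multiset.mem_add.1 hi with hi | hi
        · exact x.1.parts_pos hi
        · obtain ⟨j, hj, rfl⟩ := Multiset.mem_map.1 hi
          have := x.2.parts_pos hj
          omega
      parts_sum := by
        rw [Multiset.sum_add, Multiset.sum_map_mul_left, Multiset.map_id', x.1.parts_sum,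
          x.2.parts_sum]
        omega }) ?_ ?_
  · intro x hx
    refine Finset.mem_coe.2 (Finset.mem_filter.2 ⟨Finset.mem_univ _, ?_⟩)
    dsimp only
    rw [hfe x hx, Multiset.sum_map_mul_left, Multiset.map_id', x.2.parts_sum]
    omega
  · intro x hx y hy h
    have h := congrArg Nat.Partition.parts h
    dsimp only at h
    have h1 := hfe x hx
    have h2 := hfo x hx
    rw [h, hfe y hy] at h1
    rw [h, hfo y hy] at h2
    refine Prod.ext (Nat.Partition.ext h2.symm) (Nat.Partition.ext ?_)
    exact Multiset.map_injective (fun a b hab => by simpa using hab) h1.symm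

lemma sum_card_odds_mul_le (n : ℕ) :
    ∑ k ∈ Finset.range (n / 2 + 1),
      (Nat.Partition.odds (n - 2 * k)).card * Fintype.card k.Partition ≤
      Fintype.card n.Partition := by
  rw [← Finset.card_univ, Finset.card_eq_sum_card_fiberwise
    (f := fun p : n.Partition => (p.parts.filter Even).sum / 2) (t := Finset.range (n / 2 + 1))]
  · refine Finset.sum_le_sum fun k hk => ?_
    have := Finset.mem_range.1 hk
    exact card_odds_mul_le n k (by omega)
  · intro p _
    have h1 := Multiset.filter_add_not Even p.parts
    have h2 := congrArg Multiset.sum h1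
    rw [Multiset.sum_add, p.parts_sum] at h2
    rw [Finset.mem_coe, Finset.mem_range]
    dsimp only
    omega

variable {N n : ℕ} {A A' : Finset ℕ}

lemma sum_fin_le_sum (hA : A.card = N) : ∑ i : Fin N, (i : ℕ) ≤ ∑ x ∈ A, x := by
  rw [← sum_enum hA]
  exact Finset.sum_le_sum fun i _ => (strictMono_enum hA).le_apply_fin i

/-- The halves of the even elements of a set. -/
def halfEvens (A : Finset ℕ) : Finset ℕ := (A.filter Even).image (· / 2)

lemma image_halfEvens (A : Finset ℕ) : (halfEvens A).image (2 * ·) = A.filter Even := by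
  rw [halfEvens, Finset.image_image]
  conv_rhs => rw [← Finset.image_id (s := A.filter Even)]
  refine Finset.image_congr fun x hx => ?_
  obtain ⟨r, hr⟩ := (Finset.mem_filter.1 hx).2
  simp only [Function.comp, id]
  omega

lemma two_mul_left_injective : Function.Injective (fun x : ℕ => 2 * x) :=
  fun x y h => by simpa using h

lemma card_halfEvens (A : Finset ℕ) : (halfEvens A).card = (A.filter Even).card := by
  rw [← image_halfEvens, Finset.card_image_of_injective _ two_mul_left_injective]

lemma two_mul_sum_halfEvens (A : Finset ℕ) :
    2 * ∑ x ∈ halfEvens A, x = ∑ x ∈ A.filter Even, x := by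
  rw [← image_halfEvens, Finset.sum_image fun x _ y _ h => two_mul_left_injective h,
    Finset.mul_sum]

/-- Replace the even elements of `A` by `0, 2, …, 2(a - 1)`. -/
def lowerEvens (A : Finset ℕ) : Finset ℕ :=
  A.filter (¬ Even ·) ∪ (Finset.range (A.filter Even).card).image (2 * ·)

lemma filter_even_lowerEvens (A : Finset ℕ) :
    (lowerEvens A).filter Even = (Finset.range (A.filter Even).card).image (2 * ·) := by
  ext x
  simp only [lowerEvens, Finset.mem_filter, Finset.mem_union, Finset.mem_image]
  constructor
  · rintro ⟨h | h, he⟩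
    · exact absurd he h.2
    · exact h
  · rintro ⟨y, hy, rfl⟩
    exact ⟨Or.inr ⟨y, hy, rfl⟩, even_two_mul y⟩

lemma filter_not_even_lowerEvens (A : Finset ℕ) :
    (lowerEvens A).filter (¬ Even ·) = A.filter (¬ Even ·) := by
  ext x
  simp only [lowerEvens, Finset.mem_filter, Finset.mem_union, Finset.mem_image]
  constructor
  · rintro ⟨h | ⟨y, -, rfl⟩, he⟩
    · exact h
    · exact absurd (even_two_mul y) he
  · exact fun h => ⟨Or.inl h, h.2⟩

lemma card_filter_even_lowerEvens (A : Finset ℕ) :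
    ((lowerEvens A).filter Even).card = (A.filter Even).card := by
  rw [filter_even_lowerEvens, Finset.card_image_of_injective _ two_mul_left_injective,
    Finset.card_range]

lemma isLowEven_lowerEvens (A : Finset ℕ) : IsLowEven (lowerEvens A) := by
  rw [IsLowEven, card_filter_even_lowerEvens, filter_even_lowerEvens]

lemma card_lowerEvens (A : Finset ℕ) : (lowerEvens A).card = A.card := by
  rw [← Finset.card_filter_add_card_filter_not (s := lowerEvens A) Even,
    card_filter_even_lowerEvens, filter_not_even_lowerEvens,
    Finset.card_filter_add_card_filter_not]

/-- Half of the amount by which `lowerEvens` decreases the sum. -/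
def evenExcess (A : Finset ℕ) : ℕ :=
  ∑ x ∈ halfEvens A, x - ∑ i : Fin (halfEvens A).card, (i : ℕ)

lemma halfEvens_mem_betaSets (A : Finset ℕ) :
    halfEvens A ∈ betaSets (halfEvens A).card (evenExcess A) := by
  refine mem_betaSets.2 ⟨rfl, ?_⟩
  have := sum_fin_le_sum (A := halfEvens A) rfl
  rw [evenExcess]
  omega

lemma sum_lowerEvens (A : Finset ℕ) : ∑ x ∈ lowerEvens A, x + 2 * evenExcess A = ∑ x ∈ A, x := by
  have h1 := (mem_betaSets.1 (halfEvens_mem_betaSets A)).2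
  have h2 := two_mul_sum_halfEvens A
  rw [← Finset.sum_filter_add_sum_filter_not (lowerEvens A) Even,
    ← Finset.sum_filter_add_sum_filter_not A Even, filter_not_even_lowerEvens,
    filter_even_lowerEvens, Finset.sum_image fun x _ y _ h => two_mul_left_injective h,
    ← Finset.mul_sum, ← card_halfEvens, Finset.sum_range]
  change _ = ∑ x ∈ A with Even x, x at h2
  omega

lemma lowerEvens_mem (hA : A ∈ betaSets N n) :
    2 * evenExcess A ≤ n ∧ lowerEvens A ∈ betaSets N (n - 2 * evenExcess A) := by
  obtain ⟨hA1, hA2⟩ := mem_betaSets.1 hA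
  have h1 := sum_lowerEvens A
  have h2 := sum_fin_le_sum ((card_lowerEvens A).trans hA1)
  refine ⟨by omega, mem_betaSets.2 ⟨(card_lowerEvens A).trans hA1, by omega⟩⟩

lemma eq_of_lowerEvens_eq (h : lowerEvens A = lowerEvens A')
    (hg : gaps (halfEvens A).card (halfEvens A) = gaps (halfEvens A').card (halfEvens A')) :
    A = A' := by
  have h1 := card_filter_even_lowerEvens A
  rw [h, card_filter_even_lowerEvens, ← card_halfEvens, ← card_halfEvens] at h1
  rw [← h1] at hg
  have h2 := gaps_injOn h1.symm rfl hg
  rw [← Finset.filter_union_filter_not_eq Even A, ← image_halfEvens, h2, image_halfEvens,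
    ← filter_not_even_lowerEvens, h, filter_not_even_lowerEvens,
    Finset.filter_union_filter_not_eq]

lemma card_filter_evenExcess_le (N n k : ℕ) :
    ((betaSets N n).filter (evenExcess · = k)).card ≤
      ((betaSets N (n - 2 * k)).filter IsLowEven).card * Fintype.card k.Partition := by
  have h1 : (Finset.univ.image (Nat.Partition.parts (n := k))).card ≤ Fintype.card k.Partition :=
    Finset.card_image_le
  refine le_trans ?_ (Nat.mul_le_mul_left _ h1)
  rw [← Finset.card_product]
  refine Finset.card_le_card_of_injOn
    (fun A => (lowerEvens A, gaps (halfEvens A).card (halfEvens A))) ?_ ?_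
  · intro A hA
    obtain ⟨hA', rfl⟩ := Finset.mem_filter.1 hA
    rw [Finset.mem_coe, Finset.mem_product]
    refine ⟨?_, ?_⟩
    · rw [Finset.mem_filter]
      exact ⟨(lowerEvens_mem hA').2, isLowEven_lowerEvens A⟩
    · exact Finset.mem_image.2 ⟨gapsPartition (N := (halfEvens A).card) (n := evenExcess A)
        ⟨halfEvens A, halfEvens_mem_betaSets A⟩, Finset.mem_univ _, by rw [gapsPartition]⟩
  · intro A _ A' _ h
    exact eq_of_lowerEvens_eq (congrArg Prod.fst h) (congrArg Prod.snd h)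

lemma card_betaSets_le_sum (N n : ℕ) : (betaSets N n).card ≤ ∑ k ∈ Finset.range (n / 2 + 1),
    ((betaSets N (n - 2 * k)).filter IsLowEven).card * Fintype.card k.Partition := by
  rw [Finset.card_eq_sum_card_fiberwise (f := evenExcess) (t := Finset.range (n / 2 + 1))]
  · exact Finset.sum_le_sum fun k _ => card_filter_evenExcess_le N n k
  · intro A hA
    have := (lowerEvens_mem hA).1
    rw [Finset.mem_coe, Finset.mem_range]
    omega

lemma card_odds_le_card_basicSets (hnN : n ≤ N) :
    (Nat.Partition.odds n).card ≤ (basicSets N n).card := by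
  refine le_trans ?_ (card_filter_isLowEven_le hnN)
  by_contra! hlt
  have h1 : ∑ k ∈ Finset.range (n / 2 + 1),
      ((betaSets N (n - 2 * k)).filter IsLowEven).card * Fintype.card k.Partition <
      ∑ k ∈ Finset.range (n / 2 + 1),
        (Nat.Partition.odds (n - 2 * k)).card * Fintype.card k.Partition := by
    refine Finset.sum_lt_sum (fun k _ => Nat.mul_le_mul_right _ ?_) ⟨0, by simp, ?_⟩
    · have hk : n - 2 * k ≤ N := by omega
      exact (card_filter_isLowEven_le hk).trans (card_basicSets_le hk)
    · exact Nat.mul_lt_mul_of_pos_right hlt Fintype.card_pos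
  have h2 := sum_card_odds_mul_le n
  have h3 := card_betaSets_le_sum N n
  have h4 := le_card_betaSets hnN
  omega

end Counting

/-- For every positive integer n, the symmetric group S_n possesses a 2-basic set
containing every irreducible character χ with ε ⊗ χ = χ, where ε is the sign character. -/
theorem Sn_has_twoBasicSet_containing_selfAssociated (n : ℕ) (hn : 0 < n) :
    ∃ B : Set (Equiv.Perm (Fin n) → ℂ),
      IsTwoBasicSet (Equiv.Perm (Fin n)) B ∧
      ∀ f : Equiv.Perm (Fin n) → ℂ, IsIrrChar (Equiv.Perm (Fin n)) f →
        (fun g => ((Equiv.Perm.sign g : ℤ) : ℂ) * f g) = f → f ∈ B := by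
  exact exists_twoBasicSet_of_card_le le_rfl (card_odds_le_card_basicSets le_rfl)
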